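/- Let φ(x,y) = a₁x² + a₂xy + a₃y² be a non-degenerate rational quadratic form (a₁,a₂,a₃ ∈ ℚ, a₂² − 4a₁a₃ ≠ 0), let 0 < s < 1 and C ≥ 1. There exist constants ε = ε(φ, s) > 0, K = K(φ, s) > 0 and an exponent e = e(s) > 0 such that the following holds for all δ > 0. Let A ⊂ [0,1] be any δ-separated set of cardinality ⌈δ^{-s}⌉ such that #(A ∩ I) ≤ C·l^s·(#A) for every interval I of length l ≥ δ. Then for every subset B ⊆ A with #B ≥ δ^{ε}(#A), one has E_δ(B + B) + E_δ(φ(B,B)) ≥ K·C^{-e}·δ^{-ε}·(#A). -/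

import Mathlib

open MeasureTheory Real
open scoped Classical

/-- `E_δ(A)`: the δ-covering number of `A ⊆ ℝ`, the minimal number of sets of
diameter at most `δ` needed to cover `A`. -/
noncomputable def coverNum (δ : ℝ) (A : Set ℝ) : ℕ :=
  sInf {m : ℕ | ∃ F : Finset (Set ℝ), F.card = m ∧
    (∀ U ∈ F, EMetric.diam U ≤ ENNReal.ofReal δ) ∧ A ⊆ ⋃ U ∈ F, U}

/-!
Put `N = δ⁻¹`, replace `B` by the integers `⌊N * x⌋`, `x ∈ B`, and suppose that both covering
numbers are at most `K * #B`. By the Plünneke–Ruzsa inequalities the multipliers of `B`, the reals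
`c` for which `B + c • B` is small, are stable under the field operations up to powers of `K`. As
`φ` takes few values on `B × B`, there are many near collisions `φ(p) ≈ φ(q)`. For a popular
difference `d = p - q` they all satisfy nearly the same linear equation, whose coefficients are
the partial derivatives of `φ` at `d`, so the ratio of these derivatives is a multiplier, and so
is `d.1 / d.2`, which is a Möbius transform of it. Hence the differences of a large subset of `B`,
divided by a fixed `k ≈ N`, are multipliers, and with them all quotients of such differences.
Either these quotients are dense in `[0, 1]`, or the set they form has a gap. In both cases some
multipliers `c` and `d` make `c * a + d * a'` nearly injective on pairs of elements of `B`, which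
non-concentration forbids unless `N` is at most a power of `K`.
-/

open scoped Pointwise

namespace DiscretizedSumProduct

section Counting

variable {ι κ : Type*} [DecidableEq κ]

lemma card_le_of_abs_sub_le {S : Finset ℤ} {R : ℝ} (hR : 0 ≤ R)
    (h : ∀ x ∈ S, ∀ y ∈ S, |(x : ℝ) - y| ≤ R) : (S.card : ℝ) ≤ R + 1 := by
  rcases S.eq_empty_or_nonempty with rfl | hS
  · simp only [Finset.card_empty, Nat.cast_zero]
    positivity
  have hsub : S ⊆ Finset.Icc (S.min' hS) (S.min' hS + ⌊R⌋) := fun y hy => by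
    have hle : y - S.min' hS ≤ ⌊R⌋ := by
      rw [Int.le_floor]
      push_cast
      exact (abs_le.1 (h y hy _ (S.min'_mem hS))).2
    exact Finset.mem_Icc.2 ⟨S.min'_le y hy, by omega⟩
  have hfloor := Int.floor_nonneg.2 hR
  have hcard : (S.card : ℤ) ≤ ⌊R⌋ + 1 := by
    have := Finset.card_le_card hsub
    rw [Int.card_Icc] at this
    omega
  calc (S.card : ℝ) ≤ ⌊R⌋ + 1 := by exact_mod_cast hcard
    _ ≤ R + 1 := by gcongr; exact Int.floor_le R

lemma card_le_mul_card_image_of_fiber_le (I : Finset ι) (f : ι → κ) {B : ℝ}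
    (h : ∀ c, ((I.filter (f · = c)).card : ℝ) ≤ B) : (I.card : ℝ) ≤ B * (I.image f).card := by
  rw [Finset.card_eq_sum_card_image f I, Nat.cast_sum, mul_comm, ← nsmul_eq_mul]
  exact Finset.sum_le_card_nsmul _ _ _ fun c _ => h c

lemma card_image_le_of_abs_sub_le (I : Finset ι) (f : ι → κ) (g : ι → ℤ) {R : ℝ} (hR : 0 ≤ R)
    (h : ∀ i ∈ I, ∀ j ∈ I, f i = f j → |(g i : ℝ) - g j| ≤ R) :
    ((I.image g).card : ℝ) ≤ (R + 1) * (I.image f).card := by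
  have hsub : I.image g ⊆ (I.image f).biUnion fun c => (I.filter (f · = c)).image g := by
    intro y hy
    obtain ⟨i, hi, rfl⟩ := Finset.mem_image.1 hy
    exact Finset.mem_biUnion.2 ⟨f i, Finset.mem_image_of_mem _ hi,
      Finset.mem_image_of_mem _ (Finset.mem_filter.2 ⟨hi, rfl⟩)⟩
  have hfib (c : κ) : (((I.filter (f · = c)).image g).card : ℝ) ≤ R + 1 := by
    refine card_le_of_abs_sub_le hR fun x hx y hy => ?_
    obtain ⟨i, hi, rfl⟩ := Finset.mem_image.1 hx
    obtain ⟨j, hj, rfl⟩ := Finset.mem_image.1 hy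
    rw [Finset.mem_filter] at hi hj
    exact h i hi.1 j hj.1 (hi.2.trans hj.2.symm)
  calc ((I.image g).card : ℝ)
      ≤ ∑ c ∈ I.image f, (((I.filter (f · = c)).image g).card : ℝ) :=
        mod_cast (Finset.card_le_card hsub).trans Finset.card_biUnion_le
    _ ≤ (I.image f).card • (R + 1) := Finset.sum_le_card_nsmul _ _ _ fun c _ => hfib c
    _ = (R + 1) * (I.image f).card := by rw [nsmul_eq_mul, mul_comm]

lemma card_sq_le_card_image_mul_card_collisions (I : Finset ι) (f : ι → κ) :
    (I.card : ℝ) ^ 2 ≤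
      (I.image f).card * ((I ×ˢ I).filter fun p => f p.1 = f p.2).card := by
  have hcoll : ((I ×ˢ I).filter fun p => f p.1 = f p.2).card =
      ∑ c ∈ I.image f, (I.filter (f · = c)).card ^ 2 := by
    rw [Finset.card_eq_sum_card_fiberwise (f := fun p => f p.1) (t := I.image f)]
    · refine Finset.sum_congr rfl fun c _ => ?_
      rw [sq, ← Finset.card_product]
      congr 1
      ext ⟨a, b⟩
      simp only [Finset.mem_filter, Finset.mem_product]
      grind
    · intro p hp
      rw [Finset.mem_coe, Finset.mem_filter, Finset.mem_product] at hp
      exact Finset.mem_coe.2 (Finset.mem_image_of_mem _ hp.1.1)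
  rw [hcoll, Finset.card_eq_sum_card_image f I]
  push_cast
  exact sq_sum_le_card_mul_sum_sq

lemma card_add_le_mul {G : Type*} [DecidableEq G] [Add G] (X Y : Finset G) :
    ((X + Y).card : ℝ) ≤ X.card * Y.card :=
  mod_cast Finset.card_add_le

end Counting

section Multipliers

lemma abs_sub_sub_floor_sub_floor_le (x y : ℝ) : |(x - y) - (⌊x⌋ - ⌊y⌋)| ≤ 1 := by
  rw [sub_sub_sub_comm, Int.self_sub_floor, Int.self_sub_floor]
  exact (Int.abs_sub_lt_one_of_floor_eq_floor (by simp)).le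

/-- The dilate `c • A`, rounded down to the integers. -/
noncomputable def floorDilate (c : ℝ) (A : Finset ℤ) : Finset ℤ :=
  A.image fun a : ℤ => ⌊c * a⌋

/-- The real number `c` is a multiplier of `A` with loss `K ^ j` if the sumset of `A` and the
discretized dilate of `A` by `c` has at most `K ^ j * #A` elements. For a set of small doubling
the multipliers behave like a ring, the exponent `j` growing with every operation. -/
def IsMultiplier (A : Finset ℤ) (K : ℝ) (j : ℕ) (c : ℝ) : Prop :=
  ((A + floorDilate c A).card : ℝ) ≤ K ^ j * A.card

/-- The set `A` has doubling at most `K`; the normalization `100 ≤ K` lets a power of `K` absorb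
numerical constants. -/
structure SmallDoubling (A : Finset ℤ) (K : ℝ) : Prop where
  nonempty : A.Nonempty
  hundred_le : 100 ≤ K
  card_add_self_le : ((A + A).card : ℝ) ≤ K * A.card

variable {A : Finset ℤ} {K c d : ℝ} {i j b : ℕ}

lemma floor_mem_floorDilate {a : ℤ} (ha : a ∈ A) : ⌊c * a⌋ ∈ floorDilate c A :=
  Finset.mem_image_of_mem _ ha

lemma floorDilate_mono {A' : Finset ℤ} (h : A' ⊆ A) : floorDilate c A' ⊆ floorDilate c A :=
  Finset.image_subset_image h

lemma image_add_floor_eq (A B : Finset ℤ) (c : ℝ) :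
    ((A ×ˢ B).image fun p : ℤ × ℤ => p.1 + ⌊c * p.2⌋) = A + floorDilate c B := by
  ext v
  simp only [floorDilate, Finset.mem_image, Finset.mem_product, Finset.mem_add, Prod.exists]
  grind

lemma neg_mem_sub_self {w : ℤ} (hw : w ∈ A - A) : -w ∈ A - A := by
  rw [← neg_sub A A]
  exact Finset.neg_mem_neg hw

lemma add_mem_two_nsmul_sub {v w : ℤ} (hv : v ∈ A - A) (hw : w ∈ A - A) :
    v + w ∈ 2 • A - 2 • A := by
  rw [two_nsmul, add_sub_add_comm]
  exact Finset.add_mem_add hv hw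

namespace SmallDoubling

lemma one_le (hA : SmallDoubling A K) : 1 ≤ K := by linarith [hA.hundred_le]

lemma pos (hA : SmallDoubling A K) : 0 < K := by linarith [hA.hundred_le]

lemma card_pos (hA : SmallDoubling A K) : (0 : ℝ) < A.card :=
  mod_cast hA.nonempty.card_pos

lemma card_nsmul_sub_nsmul_le (hA : SmallDoubling A K) (m n : ℕ) :
    ((m • A - n • A).card : ℝ) ≤ K ^ (m + n) * A.card := by
  have hPR : ((m • A - n • A).card : ℝ) ≤ ((A + A).card / A.card : ℝ) ^ (m + n) * A.card := by
    have := (NNRat.cast_le (K := ℝ)).2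
      (Finset.pluennecke_ruzsa_inequality_nsmul_sub_nsmul_add hA.nonempty A m n)
    push_cast at this
    exact this
  refine hPR.trans ?_
  gcongr
  exact (div_le_iff₀ hA.card_pos).2 hA.card_add_self_le

lemma card_add_nsmul_sub_nsmul_le (hA : SmallDoubling A K) (n : ℕ) :
    ((A + (n • A - n • A)).card : ℝ) ≤ K ^ (2 * n + 1) * A.card := by
  rw [← add_sub_assoc, ← succ_nsmul', show 2 * n + 1 = n + 1 + n by ring]
  exact hA.card_nsmul_sub_nsmul_le (n + 1) n

end SmallDoubling

namespace IsMultiplier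

lemma mono (hK : 1 ≤ K) (hij : i ≤ j) (h : IsMultiplier A K i c) : IsMultiplier A K j c :=
  h.trans (by gcongr)

lemma exists_floorDilate_subset (hA : SmallDoubling A K) (h : IsMultiplier A K j c) :
    ∃ X : Finset ℤ, (X.card : ℝ) ≤ K ^ j ∧ floorDilate c A ⊆ X + (A - A) := by
  rw [IsMultiplier, add_comm] at h
  obtain ⟨X, -, hX, hcover⟩ := Finset.ruzsa_covering_add hA.nonempty h
  exact ⟨X, hX, hcover⟩

lemma exists_approx (hA : SmallDoubling A K) (h : IsMultiplier A K j c) :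
    ∃ X : Finset ℝ, (X.card : ℝ) ≤ K ^ j ∧
      ∀ a ∈ A, ∃ x ∈ X, ∃ w ∈ A - A, |c * a - (x + w)| ≤ 1 := by
  obtain ⟨X, hX, hcover⟩ := h.exists_floorDilate_subset hA
  refine ⟨X.image Int.cast, (Nat.cast_le.2 Finset.card_image_le).trans hX, fun a ha => ?_⟩
  obtain ⟨x, hx, w, hw, hxw⟩ := Finset.mem_add.1 (hcover (floor_mem_floorDilate ha))
  refine ⟨x, Finset.mem_image_of_mem _ hx, w, hw, ?_⟩
  rw [← Int.cast_add, hxw, Int.self_sub_floor, Int.abs_fract]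
  exact (Int.fract_lt_one _).le

lemma card_add_floorDilate_add_floorDilate_le (hA : SmallDoubling A K)
    (hc : IsMultiplier A K i c) (hd : IsMultiplier A K j d) :
    ((A + (floorDilate c A + floorDilate d A)).card : ℝ) ≤ K ^ (i + j + 5) * A.card := by
  obtain ⟨X, hX, hXA⟩ := hc.exists_floorDilate_subset hA
  obtain ⟨Y, hY, hYA⟩ := hd.exists_floorDilate_subset hA
  have hK := hA.pos
  have hsub : A + (floorDilate c A + floorDilate d A) ⊆ (X + Y) + (A + (2 • A - 2 • A)) := by
    rw [add_left_comm (X + Y), two_nsmul, add_sub_add_comm, add_add_add_comm X]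
    exact Finset.add_subset_add_left (Finset.add_subset_add hXA hYA)
  calc ((A + (floorDilate c A + floorDilate d A)).card : ℝ)
      ≤ ((X + Y) + (A + (2 • A - 2 • A))).card := mod_cast Finset.card_le_card hsub
    _ ≤ X.card * Y.card * (A + (2 • A - 2 • A)).card := by
        refine (card_add_le_mul _ _).trans ?_
        gcongr
        exact card_add_le_mul _ _
    _ ≤ K ^ i * K ^ j * (K ^ (2 * 2 + 1) * A.card) := by
        gcongr
        exact hA.card_add_nsmul_sub_nsmul_le 2
    _ = K ^ (i + j + 5) * A.card := by ring

/-- Being a multiplier is the same as having `c • A` covered, up to a bounded error, by few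
translates of an iterated difference set of `A`; all the ring operations reduce to this. -/
lemma of_approx (hA : SmallDoubling A K) {Z : Finset ℝ} {z r n : ℕ} {R : ℝ}
    (hZ : (Z.card : ℝ) ≤ K ^ z) (hR : 0 ≤ R) (hRK : 2 * R + 3 ≤ K ^ r)
    (h : ∀ a ∈ A, ∃ x ∈ Z, ∃ w ∈ n • A - n • A, |c * a - (x + w)| ≤ R) :
    IsMultiplier A K (z + r + (2 * n + 1)) c := by
  have hK := hA.pos
  set E : Finset ℤ := Finset.Icc (-(⌊R⌋ + 1)) (⌊R⌋ + 1) with hE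
  have hEcard : (E.card : ℝ) ≤ K ^ r := by
    have hfloor := Int.floor_nonneg.2 hR
    have : (E.card : ℤ) = 2 * ⌊R⌋ + 3 := by rw [hE, Int.card_Icc]; omega
    have : (E.card : ℝ) = 2 * ⌊R⌋ + 3 := by exact_mod_cast this
    linarith [Int.floor_le R]
  have hcover : floorDilate c A ⊆ (Z.image Int.floor + E) + (n • A - n • A) := by
    intro v hv
    obtain ⟨a, ha, rfl⟩ := Finset.mem_image.1 hv
    obtain ⟨x, hx, w, hw, hxw⟩ := h a ha
    rw [abs_le] at hxw
    refine Finset.mem_add.2 ⟨⌊x⌋ + (⌊c * a⌋ - ⌊x⌋ - w),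
      Finset.add_mem_add (Finset.mem_image_of_mem _ hx) ?_, w, hw, by ring⟩
    have hround := abs_le.1 (abs_sub_sub_floor_sub_floor_le (c * a) x)
    have hupper : ⌊c * a⌋ - ⌊x⌋ - w - 1 ≤ ⌊R⌋ :=
      Int.le_floor.2 (by push_cast; linarith [hround.1, hxw.2])
    have hlower : -(⌊c * a⌋ - ⌊x⌋ - w) - 1 ≤ ⌊R⌋ :=
      Int.le_floor.2 (by push_cast; linarith [hround.2, hxw.1])
    exact Finset.mem_Icc.2 ⟨by omega, by omega⟩
  calc ((A + floorDilate c A).card : ℝ)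
      ≤ ((Z.image Int.floor + E) + (A + (n • A - n • A))).card := by
        rw [add_left_comm]
        exact_mod_cast Finset.card_le_card (Finset.add_subset_add_left hcover)
    _ ≤ (Z.image Int.floor).card * E.card * (A + (n • A - n • A)).card := by
        refine (card_add_le_mul _ _).trans ?_
        gcongr
        exact card_add_le_mul _ _
    _ ≤ K ^ z * K ^ r * (K ^ (2 * n + 1) * A.card) := by
        gcongr
        · exact (Nat.cast_le.2 Finset.card_image_le).trans hZ
        · exact hA.card_add_nsmul_sub_nsmul_le n
    _ = K ^ (z + r + (2 * n + 1)) * A.card := by ring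

lemma zero (hA : SmallDoubling A K) : IsMultiplier A K 0 0 := by
  simp [IsMultiplier, floorDilate, Finset.image_const hA.nonempty]

lemma one (hA : SmallDoubling A K) : IsMultiplier A K 1 1 := by
  simpa [IsMultiplier, floorDilate] using hA.card_add_self_le

lemma add (hA : SmallDoubling A K) (hc : IsMultiplier A K i c) (hd : IsMultiplier A K j d) :
    IsMultiplier A K (i + j + 6) (c + d) := by
  obtain ⟨X, hX, hXA⟩ := hc.exists_approx hA
  obtain ⟨Y, hY, hYA⟩ := hd.exists_approx hA
  have hK := hA.pos
  refine of_approx hA (Z := X + Y) (z := i + j) (r := 1) (n := 2) (R := 2)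
    ?_ zero_le_two (by linarith [hA.hundred_le]) fun a ha => ?_
  · calc ((X + Y).card : ℝ) ≤ X.card * Y.card := card_add_le_mul X Y
      _ ≤ K ^ (i + j) := by rw [pow_add]; gcongr
  · obtain ⟨x, hx, u, hu, hxu⟩ := hXA a ha
    obtain ⟨y, hy, v, hv, hyv⟩ := hYA a ha
    refine ⟨x + y, Finset.add_mem_add hx hy, u + v, add_mem_two_nsmul_sub hu hv, ?_⟩
    push_cast
    rw [abs_le] at *
    constructor <;> linarith

lemma neg (hA : SmallDoubling A K) (hc : IsMultiplier A K i c) :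
    IsMultiplier A K (i + 4) (-c) := by
  obtain ⟨X, hX, hXA⟩ := hc.exists_approx hA
  refine of_approx hA (Z := -X) (r := 1) (n := 1) (R := 1) (by rwa [Finset.card_neg])
    zero_le_one (by linarith [hA.hundred_le]) fun a ha => ?_
  obtain ⟨x, hx, u, hu, hxu⟩ := hXA a ha
  refine ⟨-x, Finset.neg_mem_neg hx, -u, by simpa only [one_nsmul] using neg_mem_sub_self hu, ?_⟩
  rw [← abs_neg]
  convert hxu using 2
  push_cast
  ring

lemma sub (hA : SmallDoubling A K) (hc : IsMultiplier A K i c) (hd : IsMultiplier A K j d) :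
    IsMultiplier A K (i + j + 10) (c - d) := by
  rw [sub_eq_add_neg, show i + j + 10 = i + (j + 4) + 6 by ring]
  exact hc.add hA (hd.neg hA)

lemma mul (hA : SmallDoubling A K) (hb : |c| ≤ K ^ b)
    (hc : IsMultiplier A K i c) (hd : IsMultiplier A K j d) :
    IsMultiplier A K (2 * i + j + b + 6) (c * d) := by
  obtain ⟨X, hX, hXA⟩ := hc.exists_approx hA
  obtain ⟨Y, hY, hYA⟩ := hd.exists_approx hA
  have hK := hA.pos
  have hKb : 1 ≤ K ^ b := one_le_pow₀ hA.one_le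
  rw [show 2 * i + j + b + 6 = j + i + i + (b + 1) + (2 * 2 + 1) by ring]
  refine of_approx hA (Z := Y.image (fun y : ℝ => c * y) + (X - X)) (R := |c| + 2)
    ?_ (by positivity) ?_ fun a ha => ?_
  · calc ((Y.image (fun y : ℝ => c * y) + (X - X)).card : ℝ)
        ≤ (Y.image fun y : ℝ => c * y).card * (X - X).card := card_add_le_mul _ _
      _ ≤ Y.card * (X.card * X.card) :=
          mul_le_mul (mod_cast Finset.card_image_le) (mod_cast Finset.card_sub_le)
            (by positivity) (by positivity)
      _ ≤ K ^ j * (K ^ i * K ^ i) := by gcongr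
      _ = K ^ (j + i + i) := by ring
  · rw [pow_succ]
    nlinarith [hA.hundred_le]
  · obtain ⟨y, hy, u, hu, hyu⟩ := hYA a ha
    obtain ⟨p, hp, q, hq, rfl⟩ := Finset.mem_sub.1 hu
    obtain ⟨x₁, hx₁, w₁, hw₁, hxw₁⟩ := hXA p hp
    obtain ⟨x₂, hx₂, w₂, hw₂, hxw₂⟩ := hXA q hq
    refine ⟨c * y + (x₁ - x₂), Finset.add_mem_add (Finset.mem_image_of_mem _ hy)
      (Finset.sub_mem_sub hx₁ hx₂), w₁ + -w₂,
      add_mem_two_nsmul_sub hw₁ (neg_mem_sub_self hw₂), ?_⟩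
    have hmain : |c * (d * a - (y + (p - q : ℤ)))| ≤ |c| := by
      rw [abs_mul]
      exact mul_le_of_le_one_right (abs_nonneg c) hyu
    calc |c * d * a - (c * y + (x₁ - x₂) + (w₁ + -w₂ : ℤ))|
        = |c * (d * a - (y + (p - q : ℤ))) + (c * p - (x₁ + w₁)) - (c * q - (x₂ + w₂))| := by
          push_cast
          ring_nf
      _ ≤ |c * (d * a - (y + (p - q : ℤ)))| + |c * p - (x₁ + w₁)| + |c * q - (x₂ + w₂)| :=
          (abs_sub _ _).trans (by gcongr; exact abs_add_le _ _)
      _ ≤ |c| + 2 := by linarith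

/-- If `a' + ⌊c a⌋` determines `(a, a')` up to an error, so does `a + ⌊a' / c⌋`. -/
lemma inv (hK : 100 ≤ K) (hb : 1 ≤ K ^ b * |c|) (hc : IsMultiplier A K i c) :
    IsMultiplier A K (i + b + 1) c⁻¹ := by
  have : 0 < K := by linarith
  have hKb : 1 ≤ K ^ b := one_le_pow₀ (by linarith)
  have hc0 : c ≠ 0 := by
    rintro rfl
    norm_num at hb
  have hclose : ∀ p ∈ A ×ˢ A, ∀ q ∈ A ×ˢ A, p.2 + ⌊c * p.1⌋ = q.2 + ⌊c * q.1⌋ →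
      |((p.1 + ⌊c⁻¹ * p.2⌋ : ℤ) : ℝ) - (q.1 + ⌊c⁻¹ * q.2⌋ : ℤ)| ≤ K ^ b + 1 := by
    rintro ⟨a, a'⟩ - ⟨d, d'⟩ - h
    have hsum : |c * (a - d) + (a' - d')| ≤ 1 := by
      have hint : (⌊c * a⌋ : ℝ) - ⌊c * d⌋ = d' - a' := by
        have : ⌊c * a⌋ - ⌊c * d⌋ = d' - a' := by linarith
        exact_mod_cast this
      convert abs_sub_sub_floor_sub_floor_le (c * a) (c * d) using 2
      rw [hint]
      ring
    have hmain : |(a - d) + (c⁻¹ * a' - c⁻¹ * d')| ≤ K ^ b := by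
      rw [show (a - d) + (c⁻¹ * a' - c⁻¹ * d') = c⁻¹ * (c * (a - d) + (a' - d')) by field_simp,
        abs_mul, abs_inv]
      calc |c|⁻¹ * |c * (a - d) + (a' - d')| ≤ |c|⁻¹ * (K ^ b * |c|) := by
            gcongr
            exact hsum.trans hb
        _ = K ^ b := by field_simp
    have hround := abs_le.1 (abs_sub_sub_floor_sub_floor_le (c⁻¹ * a') (c⁻¹ * d'))
    have hmain' := abs_le.1 hmain
    push_cast
    exact abs_le.2 ⟨by linarith, by linarith⟩
  have hswap : ((A ×ˢ A).image fun p : ℤ × ℤ => p.2 + ⌊c * p.1⌋) = A + floorDilate c A := by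
    ext v
    simp only [floorDilate, Finset.mem_image, Finset.mem_product, Finset.mem_add, Prod.exists]
    grind
  have hcount := card_image_le_of_abs_sub_le (A ×ˢ A) (fun p : ℤ × ℤ => p.2 + ⌊c * p.1⌋)
    (fun p : ℤ × ℤ => p.1 + ⌊c⁻¹ * p.2⌋) (by positivity) hclose
  rw [image_add_floor_eq, hswap] at hcount
  calc ((A + floorDilate c⁻¹ A).card : ℝ)
      ≤ (K ^ b + 1 + 1) * (A + floorDilate c A).card := hcount
    _ ≤ (K ^ b * K) * (K ^ i * A.card) := by
        gcongr
        · nlinarith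
        · exact hc
    _ = K ^ (i + b + 1) * A.card := by ring

lemma natCast (hA : SmallDoubling A K) (m : ℕ) : IsMultiplier A K (7 * m) (m : ℝ) := by
  induction m with
  | zero => simpa using zero hA
  | succ m ih =>
    push_cast
    exact ih.add hA (one hA)

lemma intCast (hA : SmallDoubling A K) (m : ℤ) :
    IsMultiplier A K (7 * m.natAbs + 4) (m : ℝ) := by
  have habs := natCast hA m.natAbs
  rw [Nat.cast_natAbs] at habs
  rcases abs_choice m with h | h <;> rw [h] at habs
  · exact habs.mono hA.one_le (by omega)
  · simpa using habs.neg hA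

end IsMultiplier

end Multipliers

section Frostman

/-- A set of at most `K * N ^ s` integers in `[0, N]` obeying a Frostman condition of exponent
`s`: this is what a `δ`-separated non-concentrated subset of `[0, 1]` becomes after rescaling by
`N = δ⁻¹`. -/
structure IsFrostman (A : Finset ℤ) (N s K : ℝ) : Prop where
  one_le : 1 ≤ N
  mem_Icc : ∀ a ∈ A, (a : ℝ) ∈ Set.Icc 0 N
  card_le : (A.card : ℝ) ≤ K * N ^ s
  card_le_of_abs_sub_le : ∀ S ⊆ A, ∀ l : ℝ, 1 ≤ l → (∀ x ∈ S, ∀ y ∈ S, |(x : ℝ) - y| ≤ l) →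
    (S.card : ℝ) ≤ K * (l / N) ^ s * A.card

variable {A A' : Finset ℤ} {K N s L U R : ℝ}

namespace IsFrostman

lemma pos (hF : IsFrostman A N s K) : 0 < N := by linarith [hF.one_le]

lemma abs_sub_le (hF : IsFrostman A N s K) {a b : ℤ} (ha : a ∈ A) (hb : b ∈ A) :
    |(a : ℝ) - b| ≤ N := by
  have ha := hF.mem_Icc a ha
  have hb := hF.mem_Icc b hb
  exact abs_le.2 ⟨by linarith [ha.1, hb.2], by linarith [ha.2, hb.1]⟩

lemma card_le_of_injOn_of_abs_sub_le {ι : Type*} (hF : IsFrostman A N s K) {I : Finset ι}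
    {f : ι → ℤ} (hfA : ∀ i ∈ I, f i ∈ A) (hf : Set.InjOn f I) (hL : 1 ≤ L)
    (h : ∀ i ∈ I, ∀ j ∈ I, |(f i : ℝ) - f j| ≤ L) :
    (I.card : ℝ) ≤ K * (L / N) ^ s * A.card := by
  rw [← Finset.card_image_of_injOn hf]
  refine hF.card_le_of_abs_sub_le _ (Finset.image_subset_iff.2 hfA) L hL fun x hx y hy => ?_
  obtain ⟨i, hi, rfl⟩ := Finset.mem_image.1 hx
  obtain ⟨j, hj, rfl⟩ := Finset.mem_image.1 hy
  exact h i hi j hj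

lemma card_le_of_pairs (hF : IsFrostman A N s K) (hK : 0 ≤ K) {S : Finset (ℤ × ℤ)}
    (hS : S ⊆ A ×ˢ A) (hL : 1 ≤ L) (hU : 1 ≤ U)
    (hsnd : ∀ p ∈ S, ∀ q ∈ S, |(p.2 : ℝ) - q.2| ≤ U)
    (hfst : ∀ p ∈ S, ∀ q ∈ S, p.2 = q.2 → |(p.1 : ℝ) - q.1| ≤ L) :
    (S.card : ℝ) ≤ (K * (L / N) ^ s * A.card) * (K * (U / N) ^ s * A.card) := by
  have hN := hF.pos
  have hmem (p) (hp : p ∈ S) : p.1 ∈ A ∧ p.2 ∈ A := Finset.mem_product.1 (hS hp)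
  have himage : ((S.image Prod.snd).card : ℝ) ≤ K * (U / N) ^ s * A.card := by
    refine hF.card_le_of_abs_sub_le _ (Finset.image_subset_iff.2 fun p hp => (hmem p hp).2) U hU
      fun x hx y hy => ?_
    obtain ⟨p, hp, rfl⟩ := Finset.mem_image.1 hx
    obtain ⟨q, hq, rfl⟩ := Finset.mem_image.1 hy
    exact hsnd p hp q hq
  refine (card_le_mul_card_image_of_fiber_le S Prod.snd fun c => ?_).trans
    (mul_le_mul_of_nonneg_left himage (by positivity))
  simp only [← Finset.mem_coe] at hmem
  refine hF.card_le_of_injOn_of_abs_sub_le (f := Prod.fst)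
    (fun p hp => (hmem p (Finset.mem_filter.1 hp).1).1) ?_ hL fun p hp q hq => ?_
  · intro p hp q hq h
    rw [Finset.mem_coe, Finset.mem_filter] at hp hq
    exact Prod.ext h (hp.2.trans hq.2.symm)
  · rw [Finset.mem_filter] at hp hq
    exact hfst p hp.1 q hq.1 (hp.2.trans hq.2.symm)

lemma card_mul_card_le_card_add (hF : IsFrostman A N s K) {W : Finset ℤ} (hR : 1 ≤ R)
    (hW : ∀ v ∈ W, ∀ w ∈ W, |(v : ℝ) - w| ≤ R) :
    (A.card : ℝ) * W.card ≤ K * (R / N) ^ s * A.card * (A + W).card := by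
  rw [← Nat.cast_mul, ← Finset.card_product, ← Finset.image_add_product]
  refine card_le_mul_card_image_of_fiber_le _ _ fun v => ?_
  refine hF.card_le_of_injOn_of_abs_sub_le (f := Prod.fst)
    (fun p hp => (Finset.mem_product.1 (Finset.mem_filter.1 hp).1).1) ?_ hR fun p hp q hq => ?_
  · intro p hp q hq h
    rw [Finset.mem_coe, Finset.mem_filter] at hp hq
    exact Prod.ext h (add_left_cancel (a := p.1) (hp.2.trans (h ▸ hq.2.symm)))
  · rw [Finset.mem_filter, Finset.mem_product] at hp hq
    have hsub : (p.1 : ℝ) - q.1 = q.2 - p.2 := by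
      have : p.1 - q.1 = q.2 - p.2 := by linarith [hp.2, hq.2]
      exact_mod_cast this
    rw [hsub]
    exact hW _ hq.1.2 _ hp.1.2

end IsFrostman

lemma floorDilate_add_floorDilate (c d : ℝ) (A B : Finset ℤ) :
    floorDilate c A + floorDilate d B =
      (A ×ˢ B).image fun p : ℤ × ℤ => ⌊c * p.1⌋ + ⌊d * p.2⌋ := by
  ext v
  simp only [floorDilate, Finset.mem_image, Finset.mem_product, Finset.mem_add, Prod.exists]
  grind

variable {c d : ℝ} {J j : ℕ}

lemma card_mul_card_floorDilate_add_le (hA : SmallDoubling A K) (hF : IsFrostman A N s K)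
    (hA' : A' ⊆ A) (hc : IsMultiplier A K j c) (hd : IsMultiplier A K j d) (hR : 1 ≤ R)
    (hdiam : ∀ v ∈ floorDilate c A' + floorDilate d A', ∀ w ∈ floorDilate c A' + floorDilate d A',
      |(v : ℝ) - w| ≤ R) :
    (A.card : ℝ) * (floorDilate c A' + floorDilate d A').card ≤
      K * (R / N) ^ s * A.card * (K ^ (2 * j + 5) * A.card) := by
  have hK := hA.pos
  have hN := hF.pos
  have hsub : A + (floorDilate c A' + floorDilate d A') ⊆
      A + (floorDilate c A + floorDilate d A) := by
    gcongr <;> exact floorDilate_mono hA'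
  refine (hF.card_mul_card_le_card_add hR hdiam).trans
    (mul_le_mul_of_nonneg_left ?_ (by positivity))
  rw [two_mul]
  exact (Nat.cast_le.2 (Finset.card_le_card hsub)).trans
    (hc.card_add_floorDilate_add_floorDilate_le hA hd)

lemma card_sq_le_mul_card_floorDilate_add (hF : IsFrostman A N s K) (hK : 0 ≤ K) (hA' : A' ⊆ A)
    (hL : 1 ≤ L) (hU : 1 ≤ U)
    (hsnd : ∀ p ∈ A' ×ˢ A', ∀ q ∈ A' ×ˢ A',
      ⌊c * p.1⌋ + ⌊d * p.2⌋ = ⌊c * q.1⌋ + ⌊d * q.2⌋ → |(p.2 : ℝ) - q.2| ≤ U)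
    (hfst : ∀ p ∈ A' ×ˢ A', ∀ q ∈ A' ×ˢ A',
      ⌊c * p.1⌋ + ⌊d * p.2⌋ = ⌊c * q.1⌋ + ⌊d * q.2⌋ → p.2 = q.2 → |(p.1 : ℝ) - q.1| ≤ L) :
    (A'.card : ℝ) ^ 2 ≤ (K * (L / N) ^ s * A.card) * (K * (U / N) ^ s * A.card) *
      (floorDilate c A' + floorDilate d A').card := by
  rw [sq, ← Nat.cast_mul, ← Finset.card_product, floorDilate_add_floorDilate]
  refine card_le_mul_card_image_of_fiber_le _ _ fun v => ?_
  refine hF.card_le_of_pairs hK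
    ((Finset.filter_subset _ _).trans (Finset.product_subset_product hA' hA')) hL hU ?_ ?_
  all_goals
    intro p hp q hq
    rw [Finset.mem_filter] at hp hq
  · exact hsnd p hp.1 q hq.1 (hp.2.trans hq.2.symm)
  · exact hfst p hp.1 q hq.1 (hp.2.trans hq.2.symm)

/-- The two counts of the sumset `floorDilate c A' + floorDilate d A'`, an upper bound obtained by
adding `A` to it and a lower bound by the fibers of addition, are incompatible for small `U`. -/
lemma rpow_le_of_collisions_close (hA : SmallDoubling A K) (hF : IsFrostman A N s K)
    (hs0 : 0 ≤ s) (hs1 : s ≤ 1) (hA' : A' ⊆ A) (hJ : (A.card : ℝ) ≤ K ^ J * A'.card)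
    (hc : IsMultiplier A K j c) (hd : IsMultiplier A K j d)
    (hL : 1 ≤ L) (hR : 1 ≤ R) (hU : 1 ≤ U) (hLR : L * R ≤ K ^ (J + 1) * N)
    (hdiam : ∀ v ∈ floorDilate c A' + floorDilate d A', ∀ w ∈ floorDilate c A' + floorDilate d A',
      |(v : ℝ) - w| ≤ R)
    (hsnd : ∀ p ∈ A' ×ˢ A', ∀ q ∈ A' ×ˢ A',
      ⌊c * p.1⌋ + ⌊d * p.2⌋ = ⌊c * q.1⌋ + ⌊d * q.2⌋ → |(p.2 : ℝ) - q.2| ≤ U)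
    (hfst : ∀ p ∈ A' ×ˢ A', ∀ q ∈ A' ×ˢ A',
      ⌊c * p.1⌋ + ⌊d * p.2⌋ = ⌊c * q.1⌋ + ⌊d * q.2⌋ → p.2 = q.2 → |(p.1 : ℝ) - q.1| ≤ L) :
    (N / U) ^ s ≤ K ^ (3 * J + 2 * j + 10) := by
  have hK := hA.pos
  have hN := hF.pos
  have hcard := hA.card_pos
  have hupper := card_mul_card_floorDilate_add_le hA hF hA' hc hd hR hdiam
  have hlower := card_sq_le_mul_card_floorDilate_add hF hK.le hA' hL hU hsnd hfst
  set W := floorDilate c A' + floorDilate d A'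
  have hXZ : (L / N) ^ s * (R / N) ^ s * N ^ s ≤ K ^ (J + 1) := by
    rw [← Real.mul_rpow (by positivity) (by positivity),
      ← Real.mul_rpow (by positivity) (by positivity)]
    calc (L / N * (R / N) * N) ^ s ≤ (K ^ (J + 1)) ^ s := by
          gcongr
          rw [show L / N * (R / N) * N = L * R / N by field_simp]
          exact (div_le_iff₀ hN).2 hLR
      _ ≤ (K ^ (J + 1)) ^ (1 : ℝ) :=
          Real.rpow_le_rpow_of_exponent_le (one_le_pow₀ hA.one_le) hs1
      _ = K ^ (J + 1) := Real.rpow_one _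
  have hcube : (A.card : ℝ) ^ 3 * 1 ≤
      (A.card : ℝ) ^ 3 * (K ^ (3 * J + 2 * j + 10) * (U / N) ^ s) := by
    calc (A.card : ℝ) ^ 3 * 1 = A.card * (A.card : ℝ) ^ 2 := by ring
      _ ≤ A.card * (K ^ J * A'.card) ^ 2 := by gcongr
      _ = A.card * (K ^ (2 * J) * (A'.card : ℝ) ^ 2) := by ring
      _ ≤ A.card * (K ^ (2 * J) *
            ((K * (L / N) ^ s * A.card) * (K * (U / N) ^ s * A.card) * W.card)) := by gcongr
      _ = K ^ (2 * J + 2) * (L / N) ^ s * (U / N) ^ s * (A.card : ℝ) ^ 2 *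
            (A.card * W.card) := by ring
      _ ≤ K ^ (2 * J + 2) * (L / N) ^ s * (U / N) ^ s * (A.card : ℝ) ^ 2 *
            (K * (R / N) ^ s * (K * N ^ s) * (K ^ (2 * j + 5) * A.card)) := by
          refine mul_le_mul_of_nonneg_left (hupper.trans ?_) (by positivity)
          gcongr
          exact hF.card_le
      _ = (A.card : ℝ) ^ 3 * (K ^ (2 * J + 2 * j + 9) *
            ((L / N) ^ s * (R / N) ^ s * N ^ s) * (U / N) ^ s) := by ring
      _ ≤ (A.card : ℝ) ^ 3 * (K ^ (2 * J + 2 * j + 9) * K ^ (J + 1) * (U / N) ^ s) := by gcongr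
      _ = (A.card : ℝ) ^ 3 * (K ^ (3 * J + 2 * j + 10) * (U / N) ^ s) := by ring
  have hone := le_of_mul_le_mul_left hcube (by positivity)
  rwa [← inv_div, Real.inv_rpow (by positivity), inv_le_iff_one_le_mul₀ (by positivity)]

end Frostman

section NearSolutions

/-- The quadruples `((a, a'), (b, b'))` of elements of `A` with `|(a - b) + y (a' - b')| ≤ T`. -/
noncomputable def nearSolutions (A : Finset ℤ) (y T : ℝ) : Finset ((ℤ × ℤ) × (ℤ × ℤ)) :=
  ((A ×ˢ A) ×ˢ (A ×ˢ A)).filter fun p =>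
    |((p.1.1 : ℝ) - p.2.1) + y * ((p.1.2 : ℝ) - p.2.2)| ≤ T

variable {A A' : Finset ℤ} {K N s T V y c d : ℝ} {J j : ℕ}

lemma nearSolutions_mono (h : A' ⊆ A) : nearSolutions A' y T ⊆ nearSolutions A y T := by
  unfold nearSolutions
  gcongr

lemma mem_nearSolutions {p : (ℤ × ℤ) × (ℤ × ℤ)} :
    p ∈ nearSolutions A y T ↔ ((p.1.1 ∈ A ∧ p.1.2 ∈ A) ∧ (p.2.1 ∈ A ∧ p.2.2 ∈ A)) ∧
      |((p.1.1 : ℝ) - p.2.1) + y * ((p.1.2 : ℝ) - p.2.2)| ≤ T := by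
  simp only [nearSolutions, Finset.mem_filter, Finset.mem_product]

lemma card_pow_four_le_mul_card_nearSolutions (hA : SmallDoubling A K) (hA' : A' ⊆ A)
    (hc : IsMultiplier A K j c) (hd : IsMultiplier A K j d)
    (hcoll : ∀ p ∈ A' ×ˢ A', ∀ q ∈ A' ×ˢ A', ⌊c * p.1⌋ + ⌊d * p.2⌋ = ⌊c * q.1⌋ + ⌊d * q.2⌋ →
      |((p.1 : ℝ) - q.1) + y * ((p.2 : ℝ) - q.2)| ≤ T) :
    (A'.card : ℝ) ^ 4 ≤ K ^ (2 * j + 5) * A.card * (nearSolutions A' y T).card := by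
  have hsumset : ((floorDilate c A' + floorDilate d A').card : ℝ) ≤
      K ^ (2 * j + 5) * A.card := by
    have hsub : floorDilate c A' + floorDilate d A' ⊆ floorDilate c A + floorDilate d A := by
      gcongr <;> exact floorDilate_mono hA'
    rw [two_mul]
    exact (Nat.cast_le.2 ((Finset.card_le_card hsub).trans
      (Finset.card_le_card_add_left hA.nonempty))).trans
      (hc.card_add_floorDilate_add_floorDilate_le hA hd)
  have henergy := card_sq_le_card_image_mul_card_collisions (A' ×ˢ A')
    fun p : ℤ × ℤ => ⌊c * p.1⌋ + ⌊d * p.2⌋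
  rw [← floorDilate_add_floorDilate] at henergy
  have hsub : (((A' ×ˢ A') ×ˢ (A' ×ˢ A')).filter fun p : (ℤ × ℤ) × (ℤ × ℤ) =>
      ⌊c * p.1.1⌋ + ⌊d * p.1.2⌋ = ⌊c * p.2.1⌋ + ⌊d * p.2.2⌋) ⊆ nearSolutions A' y T := by
    intro p hp
    rw [Finset.mem_filter, Finset.mem_product] at hp
    exact Finset.mem_filter.2
      ⟨Finset.mem_product.2 hp.1, hcoll p.1 hp.1.1 p.2 hp.1.2 hp.2⟩
  have hK := hA.pos
  calc (A'.card : ℝ) ^ 4 = ((A' ×ˢ A').card : ℝ) ^ 2 := by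
        rw [Finset.card_product]
        push_cast
        ring
    _ ≤ _ := henergy
    _ ≤ K ^ (2 * j + 5) * A.card * (nearSolutions A' y T).card :=
        mul_le_mul hsumset (mod_cast Finset.card_le_card hsub) (by positivity) (by positivity)

lemma IsFrostman.card_nearSolutions_filter_le (hF : IsFrostman A N s K) (hK : 0 ≤ K)
    (hT : 1 ≤ T) (hV : 1 ≤ V) :
    (((nearSolutions A y T).filter fun p => |(p.1.2 : ℝ) - p.2.2| ≤ V).card : ℝ) ≤
      (K * (2 * T / N) ^ s * A.card) * (K * (2 * V / N) ^ s * A.card) * (A.card : ℝ) ^ 2 := by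
  set S := (nearSolutions A y T).filter fun p => |(p.1.2 : ℝ) - p.2.2| ≤ V with hS
  have hmem (p) (hp : p ∈ S) := by
    rw [hS, Finset.mem_filter, mem_nearSolutions] at hp
    exact hp
  have hN := hF.pos
  have himage : ((S.image Prod.fst).card : ℝ) ≤ (A.card : ℝ) ^ 2 := by
    have hsub : S.image Prod.fst ⊆ A ×ˢ A :=
      Finset.image_subset_iff.2 fun p hp => Finset.mem_product.2 (hmem p hp).1.1.1
    rw [sq, ← Nat.cast_mul, ← Finset.card_product]
    exact_mod_cast Finset.card_le_card hsub
  refine (card_le_mul_card_image_of_fiber_le S Prod.fst fun c => ?_).trans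
    (mul_le_mul_of_nonneg_left himage (by positivity))
  have hinj : Set.InjOn Prod.snd (S.filter fun p => p.1 = c : Set ((ℤ × ℤ) × (ℤ × ℤ))) := by
    intro p hp q hq h
    rw [Finset.mem_coe, Finset.mem_filter] at hp hq
    exact Prod.ext (hp.2.trans hq.2.symm) h
  rw [← Finset.card_image_of_injOn hinj]
  refine hF.card_le_of_pairs hK ?_ (by linarith) (by linarith) ?_ ?_
  · refine Finset.image_subset_iff.2 fun p hp => Finset.mem_product.2 ?_
    exact (hmem p (Finset.mem_filter.1 hp).1).1.1.2
  all_goals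
    simp only [Finset.forall_mem_image, Finset.mem_filter, and_imp]
    rintro p hp rfl q hq hpq
    have hp := hmem p hp
    have hq := hmem q hq
    rw [hpq] at hq
  · have hp := abs_le.1 hp.2
    have hq := abs_le.1 hq.2
    exact abs_le.2 ⟨by linarith, by linarith⟩
  · intro hsnd
    have hp := abs_le.1 hp.1.2
    have hq := abs_le.1 hq.1.2
    rw [hsnd] at hp
    exact abs_le.2 ⟨by linarith, by linarith⟩

/-- A quadruple with `|a' - b'| > V` solves `|(a - b) + y (a' - b')| ≤ T` only for `y` in an
interval of length `2 T / V`. -/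
lemma sum_card_nearSolutions_filter_le (A I : Finset ℤ) {n : ℝ} (hn : 0 < n) (hT : 0 ≤ T)
    (hV : 0 < V) :
    ∑ i ∈ I, (((nearSolutions A (i / n) T).filter fun p => V < |(p.1.2 : ℝ) - p.2.2|).card : ℝ) ≤
      (2 * T * n / V + 1) * (A.card : ℝ) ^ 4 := by
  set Q := (A ×ˢ A) ×ˢ (A ×ˢ A) with hQ
  let r (i : ℤ) (p : (ℤ × ℤ) × (ℤ × ℤ)) : Prop :=
    |((p.1.1 : ℝ) - p.2.1) + i / n * ((p.1.2 : ℝ) - p.2.2)| ≤ T ∧ V < |(p.1.2 : ℝ) - p.2.2|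
  have hfew (p) : ((I.filter (r · p)).card : ℝ) ≤ 2 * T * n / V + 1 := by
    refine card_le_of_abs_sub_le (by positivity) fun i hi k hk => ?_
    obtain ⟨-, hi, hV'⟩ := Finset.mem_filter.1 hi
    obtain ⟨-, hk, -⟩ := Finset.mem_filter.1 hk
    rw [le_div_iff₀ hV]
    set Δ := (p.1.2 : ℝ) - p.2.2
    calc |(i : ℝ) - k| * V ≤ |(i : ℝ) - k| * |Δ| := by gcongr
      _ = |i / n * Δ - k / n * Δ| * n := by
          rw [← abs_mul, ← abs_of_pos hn, ← abs_mul, abs_of_pos hn]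
          congr 1
          field_simp
      _ ≤ 2 * T * n := by
          gcongr
          rw [abs_le] at *
          exact ⟨by linarith, by linarith⟩
  have hswap := Finset.sum_card_bipartiteAbove_eq_sum_card_bipartiteBelow (s := I) (t := Q) r
  calc ∑ i ∈ I, (((nearSolutions A (i / n) T).filter
          fun p => V < |(p.1.2 : ℝ) - p.2.2|).card : ℝ)
      = ∑ i ∈ I, ((Q.bipartiteAbove r i).card : ℝ) := by
        simp only [nearSolutions, Finset.filter_filter, Finset.bipartiteAbove, r, hQ]
    _ = ∑ p ∈ Q, ((I.filter (r · p)).card : ℝ) := mod_cast hswap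
    _ ≤ Q.card • (2 * T * n / V + 1) := Finset.sum_le_card_nsmul _ _ _ fun p _ => hfew p
    _ = (2 * T * n / V + 1) * (A.card : ℝ) ^ 4 := by
        simp only [hQ, Finset.card_product, nsmul_eq_mul]
        push_cast
        ring

lemma card_pow_four_le_of_collisions_near (hA : SmallDoubling A K) (hF : IsFrostman A N s K)
    (hA' : A' ⊆ A) (hJ : (A.card : ℝ) ≤ K ^ J * A'.card) (hT : 1 ≤ T) (hV : 1 ≤ V)
    (hc : IsMultiplier A K j c) (hd : IsMultiplier A K j d)
    (hcoll : ∀ p ∈ A' ×ˢ A', ∀ q ∈ A' ×ˢ A', ⌊c * p.1⌋ + ⌊d * p.2⌋ = ⌊c * q.1⌋ + ⌊d * q.2⌋ →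
      |((p.1 : ℝ) - q.1) + y * ((p.2 : ℝ) - q.2)| ≤ T) :
    (A.card : ℝ) ^ 4 ≤ K ^ (4 * J + 2 * j + 5) * A.card *
      ((K * (2 * T / N) ^ s * A.card) * (K * (2 * V / N) ^ s * A.card) * (A.card : ℝ) ^ 2 +
        ((nearSolutions A y T).filter fun p => V < |(p.1.2 : ℝ) - p.2.2|).card) := by
  have hK := hA.pos
  have hnear := hF.card_nearSolutions_filter_le (y := y) hK.le hT hV
  have hsplit : ((nearSolutions A' y T).card : ℝ) ≤
      ((nearSolutions A y T).filter fun p => |(p.1.2 : ℝ) - p.2.2| ≤ V).card +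
        ((nearSolutions A y T).filter fun p => V < |(p.1.2 : ℝ) - p.2.2|).card := by
    refine (Nat.cast_le.2 (Finset.card_le_card (nearSolutions_mono hA'))).trans_eq ?_
    rw [← Finset.card_filter_add_card_filter_not
      (fun p : (ℤ × ℤ) × (ℤ × ℤ) => |(p.1.2 : ℝ) - p.2.2| ≤ V)]
    push_cast
    simp only [not_le]
  calc (A.card : ℝ) ^ 4 ≤ (K ^ J * A'.card) ^ 4 := by gcongr
    _ = K ^ (4 * J) * (A'.card : ℝ) ^ 4 := by ring
    _ ≤ K ^ (4 * J) * (K ^ (2 * j + 5) * A.card * (nearSolutions A' y T).card) :=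
        mul_le_mul_of_nonneg_left
          (card_pow_four_le_mul_card_nearSolutions hA hA' hc hd hcoll) (by positivity)
    _ = K ^ (4 * J + 2 * j + 5) * A.card * (nearSolutions A' y T).card := by ring
    _ ≤ _ := mul_le_mul_of_nonneg_left (by linarith) (by positivity)

/-- Average over `y = i / n` with `n = ⌈N⌉`. -/
lemma one_le_of_forall_collisions_near (hA : SmallDoubling A K) (hF : IsFrostman A N s K)
    (hA' : A' ⊆ A) (hJ : (A.card : ℝ) ≤ K ^ J * A'.card) (hT : 1 ≤ T) (hV : 1 ≤ V)
    (hdense : ∀ y ∈ Set.Icc (0 : ℝ) 1, ∃ c d, IsMultiplier A K j c ∧ IsMultiplier A K j d ∧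
      ∀ p ∈ A' ×ˢ A', ∀ q ∈ A' ×ˢ A', ⌊c * p.1⌋ + ⌊d * p.2⌋ = ⌊c * q.1⌋ + ⌊d * q.2⌋ →
        |((p.1 : ℝ) - q.1) + y * ((p.2 : ℝ) - q.2)| ≤ T) :
    1 ≤ K ^ (4 * J + 2 * j + 6) * N ^ s *
      (K ^ 2 * (2 * T / N) ^ s * (2 * V / N) ^ s + 2 * T / V + 1 / N) := by
  have hK := hA.pos
  have hN := hF.pos
  have hcard := hA.card_pos
  set n : ℕ := ⌈N⌉₊
  have hn : (0 : ℝ) < n := mod_cast Nat.ceil_pos.2 hN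
  set I := Finset.Ico (0 : ℤ) n with hI
  have hIcard : (I.card : ℝ) = n := by simp [hI]
  obtain ⟨near, hnear⟩ : ∃ x, x = (K * (2 * T / N) ^ s * A.card) *
    (K * (2 * V / N) ^ s * A.card) * (A.card : ℝ) ^ 2 := ⟨_, rfl⟩
  let far (i : ℤ) : ℝ :=
    ((nearSolutions A (i / n) T).filter fun p => V < |(p.1.2 : ℝ) - p.2.2|).card
  have henergy (i) (hi : i ∈ I) :
      (A.card : ℝ) ^ 4 ≤ K ^ (4 * J + 2 * j + 5) * A.card * (near + far i) := by
    rw [hI, Finset.mem_Ico] at hi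
    have hi0 : (0 : ℝ) ≤ i := mod_cast hi.1
    obtain ⟨c, d, hc, hd, hcoll⟩ := hdense (i / n)
      ⟨by positivity, (div_le_one hn).2 (mod_cast hi.2.le)⟩
    rw [hnear]
    exact card_pow_four_le_of_collisions_near hA hF hA' hJ hT hV hc hd hcoll
  have hfar : ∑ i ∈ I, far i ≤ (2 * T * n / V + 1) * (A.card : ℝ) ^ 4 :=
    sum_card_nearSolutions_filter_le A I hn (by positivity) (by positivity)
  have hrescale : 2 * T * n / V + 1 = n * (2 * T / V + 1 / n) := by field_simp
  refine le_of_mul_le_mul_left ?_ (by positivity : 0 < n * (A.card : ℝ) ^ 4)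
  calc n * (A.card : ℝ) ^ 4 * 1 = ∑ _i ∈ I, (A.card : ℝ) ^ 4 := by
        rw [Finset.sum_const, nsmul_eq_mul, hIcard, mul_one]
    _ ≤ ∑ i ∈ I, K ^ (4 * J + 2 * j + 5) * A.card * (near + far i) := Finset.sum_le_sum henergy
    _ = K ^ (4 * J + 2 * j + 5) * A.card * (n * near + ∑ i ∈ I, far i) := by
        rw [← Finset.mul_sum, Finset.sum_add_distrib, Finset.sum_const, nsmul_eq_mul, hIcard]
    _ ≤ K ^ (4 * J + 2 * j + 5) * (K * N ^ s) *
          (n * near + n * (2 * T / V + 1 / n) * (A.card : ℝ) ^ 4) := by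
        rw [← hrescale]
        have hnear0 : 0 ≤ near := by rw [hnear]; positivity
        refine mul_le_mul (mul_le_mul_of_nonneg_left hF.card_le (by positivity)) (by linarith)
          (add_nonneg (by positivity) (Finset.sum_nonneg fun _ _ => Nat.cast_nonneg _))
          (by positivity)
    _ = n * (A.card : ℝ) ^ 4 * (K ^ (4 * J + 2 * j + 6) * N ^ s *
          (K ^ 2 * (2 * T / N) ^ s * (2 * V / N) ^ s + 2 * T / V + 1 / n)) := by
        rw [hnear]
        ring
    _ ≤ _ := by
        gcongr
        exact Nat.le_ceil N

lemma rpow_le_of_forall_collisions_near (hA : SmallDoubling A K) (hF : IsFrostman A N s K)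
    (hA' : A' ⊆ A) (hJ : (A.card : ℝ) ≤ K ^ J * A'.card) {g : ℝ} (hs : 0 ≤ s) (hg : 0 ≤ g)
    (hsg : s + 10 * g ≤ 1)
    (hdense : ∀ y ∈ Set.Icc (0 : ℝ) 1, ∃ c d, IsMultiplier A K j c ∧ IsMultiplier A K j d ∧
      ∀ p ∈ A' ×ˢ A', ∀ q ∈ A' ×ˢ A', ⌊c * p.1⌋ + ⌊d * p.2⌋ = ⌊c * q.1⌋ + ⌊d * q.2⌋ →
        |((p.1 : ℝ) - q.1) + y * ((p.2 : ℝ) - q.2)| ≤ 5 * N ^ (2 * g)) :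
    N ^ (g * s) ≤ K ^ (4 * J + 2 * j + 9) := by
  have hK := hA.pos
  have hN := hF.pos
  have hpow {a b : ℝ} (h : a ≤ b) : N ^ a ≤ N ^ b :=
    Real.rpow_le_rpow_of_exponent_le hF.one_le h
  have hone := one_le_of_forall_collisions_near hA hF hA' hJ
    (T := 5 * N ^ (2 * g)) (V := N ^ (1 - 3 * g))
    (by linarith [Real.one_le_rpow hF.one_le (by positivity : 0 ≤ 2 * g)])
    (Real.one_le_rpow hF.one_le (by linarith)) hdense
  have hnear : N ^ s * ((2 * (5 * N ^ (2 * g)) / N) ^ s * (2 * N ^ (1 - 3 * g) / N) ^ s) ≤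
      20 * N ^ (-(g * s)) := by
    rw [← Real.mul_rpow (by positivity) (by positivity),
      ← Real.mul_rpow (by positivity) (by positivity)]
    calc (N * (2 * (5 * N ^ (2 * g)) / N * (2 * N ^ (1 - 3 * g) / N))) ^ s
        = (20 * N ^ (-g)) ^ s := by
          congr 1
          rw [show -g = 2 * g + (1 - 3 * g) - 1 by ring, Real.rpow_sub_one hN.ne',
            Real.rpow_add hN]
          field_simp
          norm_num
      _ = 20 ^ s * N ^ (-(g * s)) := by
          rw [Real.mul_rpow (by norm_num) (by positivity), ← Real.rpow_mul hN.le, neg_mul]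
      _ ≤ 20 ^ (1 : ℝ) * N ^ (-(g * s)) := by
          gcongr
          · norm_num
          · linarith
      _ = 20 * N ^ (-(g * s)) := by rw [Real.rpow_one]
  have hfar : N ^ s * (2 * (5 * N ^ (2 * g)) / N ^ (1 - 3 * g)) ≤ 10 * N ^ (-(g * s)) := by
    calc N ^ s * (2 * (5 * N ^ (2 * g)) / N ^ (1 - 3 * g))
        = 10 * N ^ (s + 2 * g - (1 - 3 * g)) := by
          rw [Real.rpow_sub hN _ (1 - 3 * g), Real.rpow_add hN]
          ring
      _ ≤ 10 * N ^ (-(g * s)) := by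
          gcongr 10 * ?_
          exact hpow (by nlinarith)
  have hend : N ^ s * (1 / N) ≤ N ^ (-(g * s)) := by
    rw [mul_one_div, ← Real.rpow_sub_one hN.ne']
    exact hpow (by nlinarith)
  have hK3 : K ^ 2 * 20 + 11 ≤ K ^ 3 := by nlinarith [hA.hundred_le, sq_nonneg (K - 1)]
  have hbound : 1 ≤ K ^ (4 * J + 2 * j + 9) * N ^ (-(g * s)) := by
    calc 1 ≤ _ := hone
      _ = K ^ (4 * J + 2 * j + 6) * (K ^ 2 *
            (N ^ s * ((2 * (5 * N ^ (2 * g)) / N) ^ s * (2 * N ^ (1 - 3 * g) / N) ^ s)) +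
            N ^ s * (2 * (5 * N ^ (2 * g)) / N ^ (1 - 3 * g)) + N ^ s * (1 / N)) := by ring
      _ ≤ K ^ (4 * J + 2 * j + 6) * (K ^ 2 * (20 * N ^ (-(g * s))) + 10 * N ^ (-(g * s)) +
            N ^ (-(g * s))) := by gcongr
      _ = K ^ (4 * J + 2 * j + 6) * (K ^ 2 * 20 + 11) * N ^ (-(g * s)) := by ring
      _ ≤ K ^ (4 * J + 2 * j + 6) * K ^ 3 * N ^ (-(g * s)) := by gcongr
      _ = K ^ (4 * J + 2 * j + 9) * N ^ (-(g * s)) := by ring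
  rwa [Real.rpow_neg hN.le, ← div_eq_mul_inv, one_le_div (by positivity)] at hbound

end NearSolutions

section DifferenceQuotients

/-- The quotients of differences of elements of `A` whose denominator is at least `U` in absolute
value. -/
def differenceQuotients (A : Finset ℤ) (U : ℝ) : Set ℝ :=
  {q | ∃ a ∈ A, ∃ b ∈ A, ∃ a' ∈ A, ∃ b' ∈ A, U ≤ |(a' : ℝ) - b'| ∧ q = (a - b) / (a' - b')}

/-- Binary expansion: the affine maps `q ↦ (q + e) / 2`, `e ∈ {0, 1}`, generate `[0, 1]`. -/
lemma exists_mem_abs_sub_le_of_halving {Q : Set ℝ} {η : ℝ} (hη : 0 ≤ η) (h0 : 0 ∈ Q) (h1 : 1 ∈ Q)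
    (hQ : ∀ q ∈ Q, q ∈ Set.Icc (0 : ℝ) 1 → ∀ e : ℝ, e = 0 ∨ e = 1 →
      ∃ q' ∈ Q, |(q + e) / 2 - q'| ≤ η)
    (k : ℕ) {y : ℝ} (hy : y ∈ Set.Icc (0 : ℝ) 1) :
    ∃ q ∈ Q, q ∈ Set.Icc (0 : ℝ) 1 ∧ |y - q| ≤ (1 / 2) ^ k + 2 * η := by
  induction k generalizing y with
  | zero =>
    refine ⟨0, h0, ⟨le_rfl, zero_le_one⟩, ?_⟩
    rw [sub_zero, abs_of_nonneg hy.1, pow_zero]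
    linarith [hy.2]
  | succ k ih =>
    obtain ⟨e, he, hye⟩ : ∃ e : ℝ, (e = 0 ∨ e = 1) ∧ 2 * y - e ∈ Set.Icc (0 : ℝ) 1 := by
      rcases le_total y (1 / 2) with hy' | hy'
      · exact ⟨0, Or.inl rfl, by linarith [hy.1], by linarith⟩
      · exact ⟨1, Or.inr rfl, by linarith, by linarith [hy.2]⟩
    obtain ⟨q, hq, hq01, hqy⟩ := ih hye
    obtain ⟨q', hq', hqq'⟩ := hQ q hq hq01 e he
    have hmid : (q + e) / 2 ∈ Set.Icc (0 : ℝ) 1 := by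
      rcases he with rfl | rfl <;> constructor <;> linarith [hq01.1, hq01.2]
    obtain ⟨r, hr, hr01, hqr⟩ : ∃ r ∈ Q, r ∈ Set.Icc (0 : ℝ) 1 ∧ |(q + e) / 2 - r| ≤ η := by
      rw [abs_le] at hqq'
      rcases le_total q' 0 with hneg | hpos
      · exact ⟨0, h0, ⟨le_rfl, zero_le_one⟩,
          abs_le.2 ⟨by linarith [hmid.1], by linarith [hqq'.2]⟩⟩
      rcases le_total q' 1 with hle | hge
      · exact ⟨q', hq', ⟨hpos, hle⟩, abs_le.2 hqq'⟩
      · exact ⟨1, h1, ⟨zero_le_one, le_rfl⟩,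
          abs_le.2 ⟨by linarith [hqq'.1], by linarith [hmid.2]⟩⟩
    refine ⟨r, hr, hr01, ?_⟩
    rw [pow_succ]
    rw [abs_le] at *
    exact ⟨by linarith, by linarith⟩

lemma abs_sub_add_sub_lt_two {x x' y y' : ℝ} (h : ⌊x⌋ + ⌊y⌋ = ⌊x'⌋ + ⌊y'⌋) :
    |(x - x') + (y - y')| < 2 := by
  have h : (⌊x⌋ : ℝ) + ⌊y⌋ = ⌊x'⌋ + ⌊y'⌋ := mod_cast h
  rw [abs_lt]
  constructor <;> linarith [Int.floor_le x, Int.lt_floor_add_one x, Int.floor_le y,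
    Int.lt_floor_add_one y, Int.floor_le x', Int.lt_floor_add_one x', Int.floor_le y',
    Int.lt_floor_add_one y']

lemma abs_mul_sub_add_mul_sub_lt {u v k a a' b b' : ℝ} (hk : k ≠ 0)
    (h : ⌊u / k * a⌋ + ⌊v / k * a'⌋ = ⌊u / k * b⌋ + ⌊v / k * b'⌋) :
    |u * (a - b) + v * (a' - b')| < 2 * |k| := by
  rw [← div_lt_iff₀ (abs_pos.2 hk), ← abs_div]
  have hsplit : (u * (a - b) + v * (a' - b')) / k =
      (u / k * a - u / k * b) + (v / k * a' - v / k * b') := by ring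
  rw [hsplit]
  exact abs_sub_add_sub_lt_two h

variable {A A' : Finset ℤ} {K N s U η k : ℝ} {J j : ℕ}

lemma IsFrostman.abs_sub_le_of_mem_floorDilate_add (hF : IsFrostman A N s K) (hA' : A' ⊆ A)
    (c d : ℝ) {v w : ℤ} (hv : v ∈ floorDilate c A' + floorDilate d A')
    (hw : w ∈ floorDilate c A' + floorDilate d A') :
    |(v : ℝ) - w| ≤ |c| * N + |d| * N + 2 := by
  rw [floorDilate_add_floorDilate, Finset.mem_image] at hv hw
  obtain ⟨p, hp, rfl⟩ := hv
  obtain ⟨q, hq, rfl⟩ := hw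
  rw [Finset.mem_product] at hp hq
  have hfst := abs_sub_sub_floor_sub_floor_le (c * p.1) (c * q.1)
  have hsnd := abs_sub_sub_floor_sub_floor_le (d * p.2) (d * q.2)
  have hcN : |c * p.1 - c * q.1| ≤ |c| * N := by
    rw [← mul_sub, abs_mul]
    gcongr
    exact hF.abs_sub_le (hA' hp.1) (hA' hq.1)
  have hdN : |d * p.2 - d * q.2| ≤ |d| * N := by
    rw [← mul_sub, abs_mul]
    gcongr
    exact hF.abs_sub_le (hA' hp.2) (hA' hq.2)
  push_cast
  rw [abs_le] at *
  exact ⟨by linarith, by linarith⟩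

lemma rpow_le_of_differenceQuotients_dense (hA : SmallDoubling A K) (hF : IsFrostman A N s K)
    (hA' : A' ⊆ A) (hJ : (A.card : ℝ) ≤ K ^ J * A'.card) {g : ℝ} (hs : 0 ≤ s) (hg : 0 ≤ g)
    (hsg : s + 10 * g ≤ 1) (hk0 : k ≠ 0) (hkN : |k| ≤ N)
    (hdiff : ∀ a ∈ A', ∀ b ∈ A', IsMultiplier A K j ((a - b) / k))
    (hU : 0 < U) (hη : 2 * (N / U) + 3 * (η * N) ≤ 5 * N ^ (2 * g))
    (hdense : ∀ y ∈ Set.Icc (0 : ℝ) 1, ∃ q ∈ differenceQuotients A' U, |y - q| ≤ 3 * η) :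
    N ^ (g * s) ≤ K ^ (4 * J + 2 * j + 9) := by
  refine rpow_le_of_forall_collisions_near hA hF hA' hJ hs hg hsg fun y hy => ?_
  obtain ⟨_, ⟨a, ha, b, hb, a', ha', b', hb', hU', rfl⟩, hyq⟩ := hdense y hy
  set n := (a : ℝ) - b
  set d := (a' : ℝ) - b'
  refine ⟨d / k, n / k, hdiff a' ha' b' hb', hdiff a ha b hb, fun p hp q hq hpq => ?_⟩
  rw [Finset.mem_product] at hp hq
  have hd : 0 < |d| := hU.trans_le hU'
  have hd0 : d ≠ 0 := abs_pos.1 hd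
  have hmain : |((p.1 : ℝ) - q.1) + n / d * (p.2 - q.2)| ≤ 2 * (N / U) := by
    rw [← mul_div_assoc, le_div_iff₀ hU]
    calc |((p.1 : ℝ) - q.1) + n / d * (p.2 - q.2)| * U
        ≤ |((p.1 : ℝ) - q.1) + n / d * (p.2 - q.2)| * |d| := by gcongr
      _ = |d * (p.1 - q.1) + n * (p.2 - q.2)| := by
          rw [← abs_mul]
          congr 1
          field_simp
      _ ≤ 2 * N := by linarith [abs_mul_sub_add_mul_sub_lt hk0 hpq]
  have herror : |(y - n / d) * ((p.2 : ℝ) - q.2)| ≤ 3 * (η * N) := by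
    rw [abs_mul, ← mul_assoc]
    gcongr
    · exact (abs_nonneg _).trans hyq
    · exact hF.abs_sub_le (hA' hp.2) (hA' hq.2)
  calc |((p.1 : ℝ) - q.1) + y * (p.2 - q.2)|
      = |(((p.1 : ℝ) - q.1) + n / d * (p.2 - q.2)) + (y - n / d) * (p.2 - q.2)| := by ring_nf
    _ ≤ _ := abs_add_le _ _
    _ ≤ 5 * N ^ (2 * g) := by linarith

/-- If `n / d` and the collision quotient `(b - a) / (a' - b')` are both difference quotients,
the gap at `(n / d + e) / 2` keeps the latter away from `(n + e d) / (2 d)`, which forbids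
collisions of `2 d a + (n + e d) a'` with large `|a' - b'|`. -/
lemma rpow_le_of_differenceQuotients_gap (hA : SmallDoubling A K) (hF : IsFrostman A N s K)
    (hs0 : 0 ≤ s) (hs1 : s ≤ 1) (hA' : A' ⊆ A) (hJ : (A.card : ℝ) ≤ K ^ J * A'.card)
    (hk0 : k ≠ 0) (hkN : |k| ≤ N) (hNk : N ≤ K ^ J * |k|)
    (hdiff : ∀ a ∈ A', ∀ b ∈ A', IsMultiplier A K j ((a - b) / k))
    (hU : 1 ≤ U) (hη : 0 ≤ η) (hUη : N ≤ U * U * η) {q e : ℝ} (hq : q ∈ differenceQuotients A' U)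
    (hq01 : q ∈ Set.Icc (0 : ℝ) 1) (he : e = 0 ∨ e = 1)
    (hgap : ∀ q' ∈ differenceQuotients A' U, η < |(q + e) / 2 - q'|) :
    (N / U) ^ s ≤ K ^ (3 * J + 4 * j + 22) := by
  have hK := hA.pos
  have hN := hF.pos
  have hKJ : 1 ≤ K ^ J := one_le_pow₀ hA.one_le
  obtain ⟨a, ha, b, hb, a', ha', b', hb', hdU, hq⟩ := hq
  set n := (a : ℝ) - b
  set d := (a' : ℝ) - b'
  have hd1 : 1 ≤ |d| := hU.trans hdU
  have hd0 : d ≠ 0 := abs_pos.1 (zero_lt_one.trans_le hd1)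
  have hnq : n = q * d := by rw [hq]; field_simp
  have hc : IsMultiplier A K (2 * j + 6) (2 * d / k) := by
    rw [two_mul, two_mul, add_div]
    exact (hdiff a' ha' b' hb').add hA (hdiff a' ha' b' hb')
  have hc' : IsMultiplier A K (2 * j + 6) ((n + e * d) / k) := by
    rcases he with rfl | rfl
    · rw [zero_mul, add_zero]
      exact (hdiff a ha b hb).mono hA.one_le (by omega)
    · rw [one_mul, add_div, two_mul]
      exact (hdiff a ha b hb).add hA (hdiff a' ha' b' hb')
  have hsize {z : ℝ} (hz : |z| ≤ 2 * |d|) : |z / k| * N ≤ 2 * |d| * K ^ J := by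
    rw [abs_div, div_mul_eq_mul_div, div_le_iff₀ (abs_pos.2 hk0), mul_assoc]
    gcongr
  have hned : |n + e * d| ≤ 2 * |d| := by
    rw [hnq, ← add_mul, abs_mul]
    gcongr
    rcases he with rfl | rfl <;> rw [abs_le] <;> constructor <;> linarith [hq01.1, hq01.2]
  rw [show 3 * J + 4 * j + 22 = 3 * J + 2 * (2 * j + 6) + 10 by ring]
  refine rpow_le_of_collisions_close hA hF hs0 hs1 hA' hJ hc hc' (L := N / |d|)
    (R := 6 * |d| * K ^ J) ((one_le_div (by positivity)).2 (hF.abs_sub_le (hA' ha') (hA' hb')))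
    (by nlinarith) hU ?_ (fun v hv w hw => ?_) (fun p hp r hr hpr => ?_)
    (fun p _ r _ hpr hsnd => ?_)
  · calc N / |d| * (6 * |d| * K ^ J) = 6 * K ^ J * N := by field_simp
      _ ≤ K ^ (J + 1) * N := by
          rw [pow_succ']
          gcongr
          linarith [hA.hundred_le]
  · have h2d : |2 * d| ≤ 2 * |d| := by rw [abs_mul, abs_two]
    nlinarith [hF.abs_sub_le_of_mem_floorDilate_add hA' _ _ hv hw, hsize h2d, hsize hned]
  · by_contra! hcontra
    rw [Finset.mem_product] at hp hr
    have hpr0 : (p.2 : ℝ) - r.2 ≠ 0 := abs_pos.1 (by linarith)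
    have hfar := hgap ((r.1 - p.1) / (p.2 - r.2))
      ⟨r.1, hr.1, p.1, hp.1, p.2, hp.2, r.2, hr.2, hcontra.le, rfl⟩
    have hclose := abs_mul_sub_add_mul_sub_lt hk0 hpr
    have hfactor : 2 * d * (p.1 - r.1) + (n + e * d) * (p.2 - r.2) =
        2 * d * (p.2 - r.2) * ((q + e) / 2 - (r.1 - p.1) / (p.2 - r.2)) := by
      rw [hnq]
      field_simp
      ring
    rw [hfactor, abs_mul, abs_mul, abs_mul, abs_two] at hclose
    have hlarge : 2 * U * U * η ≤
        2 * |d| * |(p.2 : ℝ) - r.2| * |(q + e) / 2 - (r.1 - p.1) / (p.2 - r.2)| := by gcongr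
    linarith
  · have hclose := abs_mul_sub_add_mul_sub_lt hk0 hpr
    rw [hsnd, sub_self, mul_zero, add_zero, abs_mul, abs_mul, abs_two] at hclose
    rw [le_div_iff₀ (by positivity)]
    linarith

/-- The difference quotients either fill `[0, 1]` or have a gap. -/
lemma rpow_le_of_isMultiplier_sub_div (hA : SmallDoubling A K) (hF : IsFrostman A N s K)
    (hA' : A' ⊆ A) (hJ : (A.card : ℝ) ≤ K ^ J * A'.card) {g : ℝ} (hs : 0 ≤ s) (hg : 0 ≤ g)
    (hsg : s + 10 * g ≤ 1) (hkN : |k| ≤ N) (hNk : N ≤ K ^ J * |k|)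
    (hdiff : ∀ a ∈ A', ∀ b ∈ A', IsMultiplier A K j ((a - b) / k)) :
    N ^ (g * s) ≤ K ^ (4 * J + 4 * j + 22) := by
  have hK := hA.pos
  have hN := hF.pos
  have hcard := hA.card_pos
  have hk0 : k ≠ 0 := by
    rintro rfl
    rw [abs_zero, mul_zero] at hNk
    linarith
  set U := N ^ (1 - g) with hU
  set η := N ^ (2 * g - 1) with hη
  have hU1 : 1 ≤ U := Real.one_le_rpow hF.one_le (by linarith)
  have hη0 : 0 < η := by positivity
  have hNU : N / U = N ^ g := by
    rw [hU, Real.rpow_sub hN, Real.rpow_one]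
    field_simp
  rw [Real.rpow_mul hN.le, ← hNU]
  by_cases hpair : ∀ a ∈ A', ∀ b ∈ A', |(a : ℝ) - b| < U
  · have hsmall := hF.card_le_of_abs_sub_le A' hA' U hU1 fun a ha b hb => (hpair a ha b hb).le
    have hone : (A.card : ℝ) * 1 ≤ A.card * (K ^ (J + 1) * (U / N) ^ s) := by
      calc (A.card : ℝ) * 1 ≤ K ^ J * A'.card := by rwa [mul_one]
        _ ≤ K ^ J * (K * (U / N) ^ s * A.card) := by gcongr
        _ = A.card * (K ^ (J + 1) * (U / N) ^ s) := by ring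
    have hone := le_of_mul_le_mul_left hone hcard
    rw [← inv_div, Real.inv_rpow (by positivity), inv_le_iff_one_le_mul₀ (by positivity)]
    exact hone.trans (mul_le_mul_of_nonneg_right (pow_le_pow_right₀ hA.one_le (by omega))
      (by positivity))
  push Not at hpair
  obtain ⟨a, ha, b, hb, hab⟩ := hpair
  have hab0 : (a : ℝ) - b ≠ 0 := abs_pos.1 (by linarith)
  by_cases hhalve : ∀ q ∈ differenceQuotients A' U, q ∈ Set.Icc (0 : ℝ) 1 → ∀ e : ℝ,
      e = 0 ∨ e = 1 → ∃ q' ∈ differenceQuotients A' U, |(q + e) / 2 - q'| ≤ η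
  · obtain ⟨m, hm⟩ := exists_pow_lt_of_lt_one hη0 (by norm_num : (1 / 2 : ℝ) < 1)
    have hηN : η * N = N ^ (2 * g) := by
      rw [hη, Real.rpow_sub_one hN.ne', div_mul_cancel₀ _ hN.ne']
    have hNg : N ^ g ≤ N ^ (2 * g) := Real.rpow_le_rpow_of_exponent_le hF.one_le (by linarith)
    rw [hNU, ← Real.rpow_mul hN.le]
    refine (rpow_le_of_differenceQuotients_dense hA hF hA' hJ hs hg hsg hk0 hkN hdiff
      (zero_lt_one.trans_le hU1) (by rw [hNU, hηN]; linarith) fun y hy => ?_).trans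
      (pow_le_pow_right₀ hA.one_le (by omega))
    obtain ⟨q, hq, -, hyq⟩ := exists_mem_abs_sub_le_of_halving
      (Q := differenceQuotients A' U) hη0.le
      ⟨a, ha, a, ha, a, ha, b, hb, hab, by simp⟩
      ⟨a, ha, b, hb, a, ha, b, hb, hab, (div_self hab0).symm⟩ hhalve m hy
    exact ⟨q, hq, by linarith⟩
  · push Not at hhalve
    obtain ⟨q, hq, hq01, e, he, hgap⟩ := hhalve
    have hUη : U * U * η = N := by
      rw [hU, hη, ← Real.rpow_add hN, ← Real.rpow_add hN]
      ring_nf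
      rw [Real.rpow_one]
    exact (rpow_le_of_differenceQuotients_gap hA hF hs (by linarith) hA' hJ hk0 hkN hNk hdiff hU1
      hη0.le hUη.ge hq hq01 he hgap).trans (pow_le_pow_right₀ hA.one_le (by omega))

end DifferenceQuotients

section QuadraticForm

/-- The binary quadratic form with coefficients `α`, `β`, `γ`. -/
def quadForm (α β γ x y : ℝ) : ℝ :=
  α * x ^ 2 + β * (x * y) + γ * y ^ 2

lemma quadForm_swap (α β γ x y : ℝ) : quadForm γ β α y x = quadForm α β γ x y := by
  unfold quadForm
  ring

lemma quadForm_neg (α β γ x y : ℝ) : quadForm (-α) (-β) (-γ) x y = -quadForm α β γ x y := by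
  unfold quadForm
  ring

lemma two_mul_quadForm_sub_quadForm (α β γ x y x' y' : ℝ) :
    2 * (quadForm α β γ x y - quadForm α β γ x' y') =
      (x + x') * (2 * α * (x - x') + β * (y - y')) +
        (y + y') * (β * (x - x') + 2 * γ * (y - y')) := by
  unfold quadForm
  ring

lemma card_le_of_quadForm_close_of_le {T : Finset ℤ} {α β γ x r R : ℝ} (hr : 0 < r) (hR : 0 ≤ R)
    (hderiv : ∀ y ∈ T, r ≤ β * x + 2 * γ * y)
    (hT : ∀ y ∈ T, ∀ y' ∈ T, |quadForm α β γ x y - quadForm α β γ x y'| ≤ R) :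
    (T.card : ℝ) ≤ R / r + 1 := by
  refine card_le_of_abs_sub_le (by positivity) fun y hy y' hy' => ?_
  have hfactor : quadForm α β γ x y - quadForm α β γ x y' =
      (y - y') * (((β * x + 2 * γ * y) + (β * x + 2 * γ * y')) / 2) := by
    unfold quadForm
    ring
  have hclose := hT y hy y' hy'
  rw [hfactor, abs_mul] at hclose
  have hslope : r ≤ |((β * x + 2 * γ * y) + (β * x + 2 * γ * y')) / 2| := by
    refine le_trans ?_ (le_abs_self _)
    linarith [hderiv y hy, hderiv y' hy']
  rw [le_div_iff₀ hr]
  exact (mul_le_mul_of_nonneg_left hslope (abs_nonneg _)).trans hclose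

lemma card_le_of_quadForm_close {T : Finset ℤ} {α β γ x r R : ℝ} (hr : 0 < r) (hR : 0 ≤ R)
    (hderiv : ∀ y ∈ T, r ≤ |β * x + 2 * γ * y|)
    (hT : ∀ y ∈ T, ∀ y' ∈ T, |quadForm α β γ x y - quadForm α β γ x y'| ≤ R) :
    (T.card : ℝ) ≤ 2 * (R / r) + 2 := by
  have hincreasing : ((T.filter fun y : ℤ => 0 ≤ β * x + 2 * γ * y).card : ℝ) ≤ R / r + 1 := by
    refine card_le_of_quadForm_close_of_le (α := α) (β := β) (γ := γ) (x := x) hr hR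
      (fun y hy => ?_) fun y hy y' hy' => ?_
    · rw [Finset.mem_filter] at hy
      exact (hderiv y hy.1).trans_eq (abs_of_nonneg hy.2)
    · exact hT y (Finset.mem_filter.1 hy).1 y' (Finset.mem_filter.1 hy').1
  have hdecreasing : ((T.filter fun y : ℤ => ¬ 0 ≤ β * x + 2 * γ * y).card : ℝ) ≤ R / r + 1 := by
    refine card_le_of_quadForm_close_of_le (α := -α) (β := -β) (γ := -γ) (x := x) hr hR
      (fun y hy => ?_) fun y hy y' hy' => ?_
    · rw [Finset.mem_filter, not_le] at hy
      have := hderiv y hy.1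
      rw [abs_of_neg hy.2] at this
      linarith
    · rw [quadForm_neg, quadForm_neg, ← neg_sub', abs_neg]
      exact hT y (Finset.mem_filter.1 hy).1 y' (Finset.mem_filter.1 hy').1
  rw [← Finset.card_filter_add_card_filter_not (s := T) fun y : ℤ => 0 ≤ β * x + 2 * γ * y]
  push_cast
  linarith

/-- Once `w.1` and `w.2.1` are fixed, `w.2.2` ranges over a set on which the form is close to a
constant and has large derivative. -/
lemma card_le_of_quadForm_close_of_fst {I : Finset ((ℤ × ℤ) × (ℤ × ℤ))} {A : Finset ℤ}
    {C : Finset (ℤ × ℤ)} {α β γ r R : ℝ} (hr : 0 < r) (hR : 0 ≤ R)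
    (hC : ∀ w ∈ I, (w.1.1, w.2.1) ∈ C) (hA : ∀ w ∈ I, w.1.2 ∈ A)
    (hderiv : ∀ w ∈ I, r ≤ |β * w.2.1 + 2 * γ * w.2.2|)
    (hclose : ∀ w ∈ I, ∀ w' ∈ I, w.1 = w'.1 →
      |quadForm α β γ w.2.1 w.2.2 - quadForm α β γ w'.2.1 w'.2.2| ≤ R) :
    (I.card : ℝ) ≤ (2 * (R / r) + 2) * (C.card * A.card) := by
  let key (w : (ℤ × ℤ) × (ℤ × ℤ)) : (ℤ × ℤ) × ℤ := ((w.1.1, w.2.1), w.1.2)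
  have hsub : I.image key ⊆ C ×ˢ A := Finset.image_subset_iff.2 fun w hw =>
    Finset.mem_product.2 ⟨hC w hw, hA w hw⟩
  have himage : ((I.image key).card : ℝ) ≤ C.card * A.card := by
    rw [← Nat.cast_mul, ← Finset.card_product]
    exact_mod_cast Finset.card_le_card hsub
  refine (card_le_mul_card_image_of_fiber_le I key fun c => ?_).trans
    (mul_le_mul_of_nonneg_left himage (by positivity))
  obtain ⟨⟨x, x'⟩, y⟩ := c
  set W := I.filter fun w => key w = ((x, x'), y) with hW
  have hmem (w) (hw : w ∈ W) : w ∈ I ∧ w.1 = (x, y) ∧ w.2.1 = x' := by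
    simp only [hW, key, Finset.mem_filter, Prod.mk.injEq] at hw
    exact ⟨hw.1, Prod.ext hw.2.1.1 hw.2.2, hw.2.1.2⟩
  have hinj : Set.InjOn (fun w : (ℤ × ℤ) × (ℤ × ℤ) => w.2.2) W := fun w hw w' hw' h =>
    Prod.ext ((hmem w hw).2.1.trans (hmem w' hw').2.1.symm)
      (Prod.ext ((hmem w hw).2.2.trans (hmem w' hw').2.2.symm) h)
  rw [← Finset.card_image_of_injOn hinj]
  refine card_le_of_quadForm_close (α := α) (β := β) (γ := γ) (x := x') hr hR (fun z hz => ?_)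
    fun z hz z' hz' => ?_
  · obtain ⟨w, hw, rfl⟩ := Finset.mem_image.1 hz
    rw [← (hmem w hw).2.2]
    exact hderiv w (hmem w hw).1
  · obtain ⟨w, hw, rfl⟩ := Finset.mem_image.1 hz
    obtain ⟨w', hw', rfl⟩ := Finset.mem_image.1 hz'
    obtain ⟨hwI, hw1, hw2⟩ := hmem w hw
    obtain ⟨hwI', hw1', hw2'⟩ := hmem w' hw'
    have := hclose w hwI w' hwI' (hw1.trans hw1'.symm)
    rwa [hw2, hw2'] at this

end QuadraticForm

section LinearForms

variable {A : Finset ℤ} {K N s r : ℝ}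

lemma IsFrostman.card_filter_abs_linear_lt_le_of_ne_zero (hF : IsFrostman A N s K) (hK : 0 ≤ K)
    {u : ℤ} (hu : u ≠ 0) (v : ℤ) (hr : 1 ≤ 2 * r) :
    (((A ×ˢ A).filter fun p => |(u : ℝ) * p.1 + v * p.2| < r).card : ℝ) ≤
      K * (2 * r / N) ^ s * A.card * A.card := by
  have hN := hF.pos
  set I := (A ×ˢ A).filter fun p => |(u : ℝ) * p.1 + v * p.2| < r with hI
  have hmem (p) (hp : p ∈ I) : p.1 ∈ A ∧ p.2 ∈ A ∧ |(u : ℝ) * p.1 + v * p.2| < r := by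
    rwa [hI, Finset.mem_filter, Finset.mem_product, and_assoc] at hp
  have himage : ((I.image Prod.snd).card : ℝ) ≤ A.card :=
    mod_cast Finset.card_le_card (Finset.image_subset_iff.2 fun p hp => (hmem p hp).2.1)
  refine (card_le_mul_card_image_of_fiber_le I Prod.snd fun c => ?_).trans
    (mul_le_mul_of_nonneg_left himage (by positivity))
  refine hF.card_le_of_injOn_of_abs_sub_le (f := Prod.fst)
    (fun p hp => (hmem p (Finset.mem_filter.1 hp).1).1) ?_ hr fun p hp q hq => ?_
  · intro p hp q hq h
    rw [Finset.mem_coe, Finset.mem_filter] at hp hq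
    exact Prod.ext h (hp.2.trans hq.2.symm)
  · rw [Finset.mem_filter] at hp hq
    have hp' := abs_lt.1 (hmem p hp.1).2.2
    have hq' := abs_lt.1 (hmem q hq.1).2.2
    rw [hp.2] at hp'
    rw [hq.2] at hq'
    have hu1 : (1 : ℝ) ≤ |(u : ℝ)| := mod_cast Int.one_le_abs hu
    calc |(p.1 : ℝ) - q.1| ≤ |(u : ℝ)| * |(p.1 : ℝ) - q.1| :=
          le_mul_of_one_le_left (abs_nonneg _) hu1
      _ = |(u : ℝ) * p.1 - u * q.1| := by rw [← abs_mul, mul_sub]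
      _ ≤ 2 * r := abs_le.2 ⟨by linarith, by linarith⟩

lemma IsFrostman.card_filter_abs_linear_lt_le (hF : IsFrostman A N s K) (hK : 0 ≤ K)
    {c : ℤ × ℤ} (hc : c ≠ 0) (hr : 1 ≤ 2 * r) :
    (((A ×ˢ A).filter fun p => |(c.1 : ℝ) * p.1 + c.2 * p.2| < r).card : ℝ) ≤
      K * (2 * r / N) ^ s * A.card * A.card := by
  by_cases hc1 : c.1 = 0
  · have hc2 : c.2 ≠ 0 := fun hc2 => hc (Prod.ext hc1 hc2)
    refine le_of_eq_of_le ?_ (hF.card_filter_abs_linear_lt_le_of_ne_zero hK hc2 c.1 hr)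
    rw [Nat.cast_inj]
    refine Finset.card_equiv (Equiv.prodComm ℤ ℤ) fun p => ?_
    simp [and_comm, add_comm]
  · exact hF.card_filter_abs_linear_lt_le_of_ne_zero hK hc1 c.2 hr

lemma IsFrostman.card_sq_le_card_filter_le_abs_linear (hF : IsFrostman A N s K) (hK : 0 ≤ K)
    {L : Finset (ℤ × ℤ)} (hL : ∀ c ∈ L, c ≠ 0) (hr : 1 ≤ 2 * r) :
    (A.card : ℝ) ^ 2 ≤
      ((A ×ˢ A).filter fun p => ∀ c ∈ L, r ≤ |(c.1 : ℝ) * p.1 + c.2 * p.2|).card +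
        L.card * (K * (2 * r / N) ^ s * A.card * A.card) := by
  set G := (A ×ˢ A).filter fun p => ∀ c ∈ L, r ≤ |(c.1 : ℝ) * p.1 + c.2 * p.2|
  let bad (c : ℤ × ℤ) := (A ×ˢ A).filter fun p => |(c.1 : ℝ) * p.1 + c.2 * p.2| < r
  have hcover : A ×ˢ A ⊆ G ∪ L.biUnion bad := by
    intro p hp
    rw [Finset.mem_union, or_iff_not_imp_left, Finset.mem_biUnion]
    intro hpG
    by_contra! hbad
    refine hpG (Finset.mem_filter.2 ⟨hp, fun c hc => ?_⟩)
    by_contra! hlt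
    exact hbad c hc (Finset.mem_filter.2 ⟨hp, hlt⟩)
  have hcard : A.card * A.card ≤ G.card + ∑ c ∈ L, (bad c).card := by
    rw [← Finset.card_product]
    exact (Finset.card_le_card hcover).trans ((Finset.card_union_le _ _).trans
      (Nat.add_le_add_left Finset.card_biUnion_le _))
  have hsum : ∑ c ∈ L, ((bad c).card : ℝ) ≤ L.card * (K * (2 * r / N) ^ s * A.card * A.card) := by
    rw [← nsmul_eq_mul]
    exact Finset.sum_le_card_nsmul _ _ _ fun c hc =>
      hF.card_filter_abs_linear_lt_le hK (hL c hc) hr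
  calc (A.card : ℝ) ^ 2 ≤ G.card + ∑ c ∈ L, ((bad c).card : ℝ) := by
        rw [sq]
        exact_mod_cast hcard
    _ ≤ _ := by gcongr

lemma exists_pow_mul_rpow_two_div_pow_le (hs : 0 < s) (i : ℕ) :
    ∃ q ≥ i, ∀ K : ℝ, 100 ≤ K → K ^ i * (K * (2 / K ^ q) ^ s) ≤ 1 := by
  set p := ⌈((i + 1 : ℕ) : ℝ) / s⌉₊
  refine ⟨p + 1 + i, by omega, fun K hK => ?_⟩
  have hK0 : 0 < K := by linarith
  have hbase : 2 / K ^ (p + 1 + i) ≤ (K ^ p)⁻¹ := by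
    rw [← one_div, div_le_div_iff₀ (by positivity) (by positivity), one_mul, add_assoc, pow_add,
      mul_comm]
    gcongr
    calc (2 : ℝ) ≤ K ^ 1 := by linarith
      _ ≤ K ^ (1 + i) := pow_le_pow_right₀ (by linarith) (by omega)
  have hpow : (2 / K ^ (p + 1 + i)) ^ s ≤ (K ^ (i + 1))⁻¹ := by
    refine (Real.rpow_le_rpow (by positivity) hbase hs.le).trans ?_
    rw [Real.inv_rpow (by positivity), ← Real.rpow_natCast K p, ← Real.rpow_natCast K (i + 1),
      ← Real.rpow_mul hK0.le]
    gcongr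
    · linarith
    · exact (div_le_iff₀ hs).1 (Nat.le_ceil _)
  calc K ^ i * (K * (2 / K ^ (p + 1 + i)) ^ s) ≤ K ^ i * (K * (K ^ (i + 1))⁻¹) := by gcongr
    _ = 1 := by rw [pow_succ]; field_simp

end LinearForms

section NearCollisions

variable {κ : Type*} {A : Finset ℤ} {K N s r : ℝ} {q : ℕ}

/-- The coloring `f` of `A × A` has at most `K * #A` colors, and the quadratic form varies by at
most `K * N` on each color class. Covering the values of the form by few short sets produces such
a coloring. -/
structure IsValueColoring (A : Finset ℤ) (α β γ : ℤ) (K N : ℝ) (f : ℤ × ℤ → κ) : Prop where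
  card_image_le : (((A ×ˢ A).image f).card : ℝ) ≤ K * A.card
  abs_sub_le : ∀ p ∈ A ×ˢ A, ∀ p' ∈ A ×ˢ A, f p = f p' →
    |quadForm α β γ p.1 p.2 - quadForm α β γ p'.1 p'.2| ≤ K * N

/-- The two coordinate forms and the two partial derivatives of the quadratic form, a linear form
being encoded by its coefficients. -/
def controlForms (α β γ : ℤ) : Finset (ℤ × ℤ) :=
  {(1, 0), (0, 1), (2 * α, β), (β, 2 * γ)}

/-- The points of `A × A` at which the coordinates and the partial derivatives of the quadratic
form are all at least `r` in absolute value. -/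
noncomputable def regularPoints (α β γ : ℤ) (A : Finset ℤ) (r : ℝ) : Finset (ℤ × ℤ) :=
  (A ×ˢ A).filter fun p => ∀ c ∈ controlForms α β γ, r ≤ |(c.1 : ℝ) * p.1 + c.2 * p.2|

/-- The pairs of points of `A × A` at which the values of the quadratic form differ by at most `T`,
whose coordinates are at least `r` and which are `r`-separated in each coordinate. -/
noncomputable def nearCollisions (α β γ : ℤ) (A : Finset ℤ) (T r : ℝ) :
    Finset ((ℤ × ℤ) × (ℤ × ℤ)) :=
  ((A ×ˢ A) ×ˢ (A ×ˢ A)).filter fun w =>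
    |quadForm α β γ w.1.1 w.1.2 - quadForm α β γ w.2.1 w.2.2| ≤ T ∧
      (r ≤ w.1.1 ∧ r ≤ w.1.2 ∧ r ≤ w.2.1 ∧ r ≤ w.2.2) ∧
        r ≤ |(w.1.1 : ℝ) - w.2.1| ∧ r ≤ |(w.1.2 : ℝ) - w.2.2|

lemma mem_regularPoints (hA : ∀ a ∈ A, (0 : ℝ) ≤ a) {α β γ : ℤ} {p : ℤ × ℤ} :
    p ∈ regularPoints α β γ A r ↔ p ∈ A ×ˢ A ∧ r ≤ p.1 ∧ r ≤ p.2 ∧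
      r ≤ |2 * α * (p.1 : ℝ) + β * p.2| ∧ r ≤ |β * (p.1 : ℝ) + 2 * γ * p.2| := by
  rw [regularPoints, Finset.mem_filter]
  refine and_congr_right fun hp => ?_
  rw [Finset.mem_product] at hp
  simp only [controlForms, Finset.forall_mem_insert, Finset.mem_singleton, forall_eq]
  push_cast
  rw [one_mul, one_mul, zero_mul, zero_mul, add_zero, zero_add, abs_of_nonneg (hA _ hp.1),
    abs_of_nonneg (hA _ hp.2)]

lemma exists_card_sq_le_two_mul_card_regularPoints (hs : 0 < s) {α β γ : ℤ}
    (hdisc : β ^ 2 - 4 * α * γ ≠ 0) :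
    ∃ q : ℕ, ∀ (A : Finset ℤ) (K N : ℝ), 100 ≤ K → IsFrostman A N s K → K ^ q ≤ N →
      (A.card : ℝ) ^ 2 ≤ 2 * (regularPoints α β γ A (N / K ^ q)).card := by
  obtain ⟨q, -, hq⟩ := exists_pow_mul_rpow_two_div_pow_le hs 1
  refine ⟨q, fun A K N hK hF hN => ?_⟩
  have hK0 : 0 < K := by linarith
  have hN0 := hF.pos
  have hr : 1 ≤ 2 * (N / K ^ q) := by
    linarith [(one_le_div (by positivity)).2 hN]
  have hL : ∀ c ∈ controlForms α β γ, c ≠ 0 := by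
    intro c hc h0
    simp only [controlForms, Finset.mem_insert, Finset.mem_singleton] at hc
    rcases hc with rfl | rfl | rfl | rfl <;> simp_all
  have hcount := hF.card_sq_le_card_filter_le_abs_linear hK0.le hL hr
  have hsmall : K * (2 * (N / K ^ q) / N) ^ s ≤ 1 / 100 := by
    have h1 := hq K hK
    rw [show 2 * (N / K ^ q) / N = 2 / K ^ q by field_simp]
    rw [pow_one] at h1
    have h0 : 0 ≤ K * (2 / K ^ q) ^ s := by positivity
    nlinarith
  have hcard : ((controlForms α β γ).card : ℝ) ≤ 4 :=
    mod_cast Finset.card_le_four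
  have hbad := mul_le_mul hcard (mul_le_mul_of_nonneg_right hsmall (sq_nonneg (A.card : ℝ)))
    (by positivity) (by norm_num)
  rw [sq (A.card : ℝ), ← mul_assoc (K * _)] at hbad
  unfold regularPoints
  linarith [sq_nonneg (A.card : ℝ), sq (A.card : ℝ)]

lemma IsFrostman.card_le_of_close_fst {α β γ : ℝ} (hF : IsFrostman A N s K) (hK : 100 ≤ K)
    {I : Finset ((ℤ × ℤ) × (ℤ × ℤ))} (hI : ∀ w ∈ I, w.1 ∈ A ×ˢ A ∧ w.2 ∈ A ×ˢ A)
    (hr : 1 ≤ 2 * r) (hsmall : K ^ (q + 4) * (K * (2 * r / N) ^ s) ≤ 1)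
    (hclose : ∀ w ∈ I, |(w.1.1 : ℝ) - w.2.1| < r)
    (hderiv : ∀ w ∈ I, N / K ^ q ≤ |β * w.2.1 + 2 * γ * w.2.2|)
    (hvalue : ∀ w ∈ I, ∀ w' ∈ I, w.1 = w'.1 →
      |quadForm α β γ w.2.1 w.2.2 - quadForm α β γ w'.2.1 w'.2.2| ≤ K * N) :
    16 * K * I.card ≤ (A.card : ℝ) ^ 3 := by
  have hK0 : 0 < K := by linarith
  have hN := hF.pos
  set C := (A ×ˢ A).filter fun p => |(((1, -1) : ℤ × ℤ).1 : ℝ) * p.1 +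
    ((1, -1) : ℤ × ℤ).2 * p.2| < r with hC
  have hCcard : K ^ (q + 4) * C.card ≤ (A.card : ℝ) ^ 2 := by
    have hle := hF.card_filter_abs_linear_lt_le hK0.le (c := (1, -1)) (by decide) hr
    calc K ^ (q + 4) * (C.card : ℝ)
        ≤ K ^ (q + 4) * (K * (2 * r / N) ^ s * A.card * A.card) := by gcongr
      _ = K ^ (q + 4) * (K * (2 * r / N) ^ s) * (A.card : ℝ) ^ 2 := by ring
      _ ≤ 1 * (A.card : ℝ) ^ 2 := by gcongr
      _ = (A.card : ℝ) ^ 2 := one_mul _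
  have hIC : ∀ w ∈ I, (w.1.1, w.2.1) ∈ C := by
    intro w hw
    obtain ⟨h1, h2⟩ := hI w hw
    rw [Finset.mem_product] at h1 h2
    refine Finset.mem_filter.2 ⟨Finset.mem_product.2 ⟨h1.1, h2.1⟩, ?_⟩
    push_cast
    rw [one_mul, neg_one_mul, ← sub_eq_add_neg]
    exact hclose w hw
  have hcount := card_le_of_quadForm_close_of_fst (by positivity) (by positivity) hIC
    (fun w hw => (Finset.mem_product.1 (hI w hw).1).2) hderiv hvalue
  have hfactor : 2 * (K * N / (N / K ^ q)) + 2 ≤ K ^ (q + 2) := by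
    rw [show K * N / (N / K ^ q) = K ^ (q + 1) by rw [pow_succ]; field_simp, pow_succ _ (q + 1)]
    nlinarith [one_le_pow₀ (n := q + 1) (show 1 ≤ K by linarith)]
  calc 16 * K * (I.card : ℝ) ≤ K ^ 2 * I.card := by rw [sq]; gcongr; linarith
    _ ≤ K ^ 2 * (K ^ (q + 2) * (C.card * A.card)) := by
        gcongr
        exact hcount.trans (mul_le_mul_of_nonneg_right hfactor (by positivity))
    _ = K ^ (q + 4) * C.card * A.card := by ring
    _ ≤ (A.card : ℝ) ^ 2 * A.card := by gcongr
    _ = (A.card : ℝ) ^ 3 := by ring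

lemma IsFrostman.card_le_of_close_snd {α β γ : ℝ} (hF : IsFrostman A N s K) (hK : 100 ≤ K)
    {I : Finset ((ℤ × ℤ) × (ℤ × ℤ))} (hI : ∀ w ∈ I, w.1 ∈ A ×ˢ A ∧ w.2 ∈ A ×ˢ A)
    (hr : 1 ≤ 2 * r) (hsmall : K ^ (q + 4) * (K * (2 * r / N) ^ s) ≤ 1)
    (hclose : ∀ w ∈ I, |(w.1.2 : ℝ) - w.2.2| < r)
    (hderiv : ∀ w ∈ I, N / K ^ q ≤ |2 * α * w.2.1 + β * w.2.2|)
    (hvalue : ∀ w ∈ I, ∀ w' ∈ I, w.1 = w'.1 →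
      |quadForm α β γ w.2.1 w.2.2 - quadForm α β γ w'.2.1 w'.2.2| ≤ K * N) :
    16 * K * I.card ≤ (A.card : ℝ) ^ 3 := by
  let e := (Equiv.prodComm ℤ ℤ).prodCongr (Equiv.prodComm ℤ ℤ)
  rw [← Finset.card_map e.toEmbedding]
  refine hF.card_le_of_close_fst (α := γ) (β := β) (γ := α) hK ?_ hr hsmall ?_ ?_ ?_ <;>
    simp only [Finset.forall_mem_map]
  · intro w hw
    obtain ⟨h1, h2⟩ := hI w hw
    rw [Finset.mem_product] at h1 h2
    exact ⟨Finset.mem_product.2 h1.symm, Finset.mem_product.2 h2.symm⟩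
  · exact hclose
  · intro w hw
    rw [add_comm]
    exact hderiv w hw
  · intro w hw w' hw' h
    have hww : w.1 = w'.1 := Prod.swap_injective h
    have := hvalue w hw w' hw' hww
    rwa [← quadForm_swap, ← quadForm_swap α β γ w'.2.1] at this

end NearCollisions

section NearCollisionsCount

variable {κ : Type*} {A : Finset ℤ} {K N s r : ℝ} {α β γ : ℤ} {q : ℕ} {f : ℤ × ℤ → κ}

lemma IsValueColoring.card_cube_le (hf : IsValueColoring A α β γ K N f) (hA : A.Nonempty)
    {G : Finset (ℤ × ℤ)} (hGA : G ⊆ A ×ˢ A) (hG : (A.card : ℝ) ^ 2 ≤ 2 * G.card) :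
    (A.card : ℝ) ^ 3 ≤ 4 * K * ((G ×ˢ G).filter fun w => f w.1 = f w.2).card := by
  have hpos : (0 : ℝ) < A.card := mod_cast hA.card_pos
  have hcolors : ((G.image f).card : ℝ) ≤ K * A.card :=
    (Nat.cast_le.2 (Finset.card_le_card (Finset.image_subset_image hGA))).trans hf.card_image_le
  have henergy := card_sq_le_card_image_mul_card_collisions G f
  set Ω := (G ×ˢ G).filter fun w => f w.1 = f w.2
  refine le_of_mul_le_mul_left ?_ hpos
  calc (A.card : ℝ) * (A.card : ℝ) ^ 3 = ((A.card : ℝ) ^ 2) ^ 2 := by ring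
    _ ≤ (2 * (G.card : ℝ)) ^ 2 := by gcongr
    _ = 4 * (G.card : ℝ) ^ 2 := by ring
    _ ≤ 4 * (K * A.card * Ω.card) := by
        gcongr
        exact henergy.trans (mul_le_mul_of_nonneg_right hcolors (Nat.cast_nonneg _))
    _ = A.card * (4 * K * Ω.card) := by ring

lemma regularPoints_subset (α β γ : ℤ) (A : Finset ℤ) (r : ℝ) :
    regularPoints α β γ A r ⊆ A ×ˢ A :=
  Finset.filter_subset _ _

lemma IsFrostman.card_collisions_le (hF : IsFrostman A N s K) (hK : 100 ≤ K)
    (hf : IsValueColoring A α β γ K N f) {r₁ : ℝ} (hr₁ : r₁ = N / K ^ q) (hr : 1 ≤ 2 * r)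
    (hrr : r ≤ r₁) (hsmall : K ^ (q + 4) * (K * (2 * r / N) ^ s) ≤ 1) :
    16 * K * ((regularPoints α β γ A r₁ ×ˢ regularPoints α β γ A r₁).filter
        fun w => f w.1 = f w.2).card ≤
      16 * K * (nearCollisions α β γ A (K * N) r).card + 2 * (A.card : ℝ) ^ 3 := by
  set G := regularPoints α β γ A r₁
  set Ω := (G ×ˢ G).filter fun w => f w.1 = f w.2 with hΩ
  have hG (p) (hp : p ∈ G) := (mem_regularPoints fun a ha => (hF.mem_Icc a ha).1).1 hp
  have hmem (w) (hw : w ∈ Ω) : w.1 ∈ G ∧ w.2 ∈ G ∧ f w.1 = f w.2 := by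
    rwa [hΩ, Finset.mem_filter, Finset.mem_product, and_assoc] at hw
  have hmemA (w) (hw : w ∈ Ω) : w.1 ∈ A ×ˢ A ∧ w.2 ∈ A ×ˢ A :=
    ⟨(hG _ (hmem w hw).1).1, (hG _ (hmem w hw).2.1).1⟩
  have hvalue (w) (hw : w ∈ Ω) (w') (hw' : w' ∈ Ω) (h : w.1 = w'.1) :
      |quadForm α β γ w.2.1 w.2.2 - quadForm α β γ w'.2.1 w'.2.2| ≤ K * N :=
    hf.abs_sub_le _ (hmemA w hw).2 _ (hmemA w' hw').2
      (by rw [← (hmem w hw).2.2, ← (hmem w' hw').2.2, h])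
  set X := Ω.filter fun w => |(w.1.1 : ℝ) - w.2.1| < r
  set Y := Ω.filter fun w => |(w.1.2 : ℝ) - w.2.2| < r
  have hX (w) (hw : w ∈ X) := Finset.mem_filter.1 hw
  have hY (w) (hw : w ∈ Y) := Finset.mem_filter.1 hw
  have hXcard : 16 * K * X.card ≤ (A.card : ℝ) ^ 3 :=
    hF.card_le_of_close_fst hK (fun w hw => hmemA w (hX w hw).1) hr hsmall
      (fun w hw => (hX w hw).2)
      (fun w hw => hr₁ ▸ (hG _ (hmem w (hX w hw).1).2.1).2.2.2.2)
      fun w hw w' hw' => hvalue w (hX w hw).1 w' (hX w' hw').1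
  have hYcard : 16 * K * Y.card ≤ (A.card : ℝ) ^ 3 :=
    hF.card_le_of_close_snd hK (fun w hw => hmemA w (hY w hw).1) hr hsmall
      (fun w hw => (hY w hw).2)
      (fun w hw => hr₁ ▸ (hG _ (hmem w (hY w hw).1).2.1).2.2.2.1)
      fun w hw w' hw' => hvalue w (hY w hw).1 w' (hY w' hw').1
  have hcover : Ω ⊆ nearCollisions α β γ A (K * N) r ∪ (X ∪ Y) := by
    intro w hw
    obtain ⟨h1, h2, heq⟩ := hmem w hw
    obtain ⟨hA1, hx1, hy1, -⟩ := hG _ h1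
    obtain ⟨hA2, hx2, hy2, -⟩ := hG _ h2
    simp only [Finset.mem_union, X, Y, Finset.mem_filter, nearCollisions, Finset.mem_product]
    by_cases hx : |(w.1.1 : ℝ) - w.2.1| < r
    · exact Or.inr (Or.inl ⟨hw, hx⟩)
    by_cases hy : |(w.1.2 : ℝ) - w.2.2| < r
    · exact Or.inr (Or.inr ⟨hw, hy⟩)
    exact Or.inl ⟨⟨Finset.mem_product.1 hA1, Finset.mem_product.1 hA2⟩,
      hf.abs_sub_le _ hA1 _ hA2 heq,
      ⟨hrr.trans hx1, hrr.trans hy1, hrr.trans hx2, hrr.trans hy2⟩, not_lt.1 hx, not_lt.1 hy⟩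
  have hcard : (Ω.card : ℝ) ≤ (nearCollisions α β γ A (K * N) r).card + (X.card + Y.card) :=
    mod_cast (Finset.card_le_card hcover).trans ((Finset.card_union_le _ _).trans
      (Nat.add_le_add_left (Finset.card_union_le _ _) _))
  have := mul_le_mul_of_nonneg_left hcard (show 0 ≤ 16 * K by linarith)
  linarith

lemma exists_card_cube_le_mul_card_nearCollisions (κ : Type*) (hs : 0 < s)
    (hdisc : β ^ 2 - 4 * α * γ ≠ 0) :
    ∃ q : ℕ, ∀ (A : Finset ℤ) (K N : ℝ) (f : ℤ × ℤ → κ), A.Nonempty → 100 ≤ K →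
      IsFrostman A N s K → IsValueColoring A α β γ K N f → K ^ q ≤ N →
      (A.card : ℝ) ^ 3 ≤ 8 * K * (nearCollisions α β γ A (K * N) (N / K ^ q)).card := by
  obtain ⟨q₁, hq₁⟩ := exists_card_sq_le_two_mul_card_regularPoints hs hdisc
  obtain ⟨q, hle, hq⟩ := exists_pow_mul_rpow_two_div_pow_le hs (q₁ + 4)
  refine ⟨q, fun A K N f hA hK hF hf hN => ?_⟩
  have hK1 : 1 ≤ K := by linarith
  have hN0 := hF.pos
  have hpow : K ^ q₁ ≤ K ^ q := pow_le_pow_right₀ hK1 (by omega)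
  have hr : 1 ≤ 2 * (N / K ^ q) := by linarith [(one_le_div (by positivity)).2 hN]
  have hrr : N / K ^ q ≤ N / K ^ q₁ := by gcongr
  have hcube := hf.card_cube_le hA (regularPoints_subset ..)
    (hq₁ A K N hK hF (hpow.trans hN))
  have hremoved := hF.card_collisions_le hK hf rfl hr hrr (by
    rw [show 2 * (N / K ^ q) / N = 2 / K ^ q by field_simp]
    exact hq K hK)
  linarith

end NearCollisionsCount

section Differences

variable {A : Finset ℤ} {K N s r T μ X Y l₁ l₂ : ℝ} {α β γ : ℤ} {q : ℕ}
  {w w' : (ℤ × ℤ) × (ℤ × ℤ)}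

/-- The partial derivative of the quadratic form in the first variable, as a linear form. -/
def derivFst (α β : ℤ) (d : ℤ × ℤ) : ℝ :=
  2 * α * d.1 + β * d.2

/-- The partial derivative of the quadratic form in the second variable, as a linear form. -/
def derivSnd (β γ : ℤ) (d : ℤ × ℤ) : ℝ :=
  β * d.1 + 2 * γ * d.2

lemma mem_nearCollisions : w ∈ nearCollisions α β γ A T r ↔ w.1 ∈ A ×ˢ A ∧ w.2 ∈ A ×ˢ A ∧
    |quadForm α β γ w.1.1 w.1.2 - quadForm α β γ w.2.1 w.2.2| ≤ T ∧
      (r ≤ w.1.1 ∧ r ≤ w.1.2 ∧ r ≤ w.2.1 ∧ r ≤ w.2.2) ∧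
        r ≤ |(w.1.1 : ℝ) - w.2.1| ∧ r ≤ |(w.1.2 : ℝ) - w.2.2| := by
  rw [nearCollisions, Finset.mem_filter, Finset.mem_product, and_assoc]

lemma abs_add_mul_derivFst_add_add_mul_derivSnd_le (hw : w ∈ nearCollisions α β γ A T r) :
    |(w.1.1 + w.2.1 : ℝ) * derivFst α β (w.1 - w.2) +
      (w.1.2 + w.2.2 : ℝ) * derivSnd β γ (w.1 - w.2)| ≤ 2 * T := by
  have hclose := (mem_nearCollisions.1 hw).2.2.1
  have hpolar := two_mul_quadForm_sub_quadForm α β γ w.1.1 w.1.2 w.2.1 w.2.2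
  simp only [derivFst, derivSnd, Prod.fst_sub, Prod.snd_sub, Int.cast_sub]
  rw [← hpolar, abs_mul, abs_two]
  gcongr

/-- If `l₁` is large then so is `Y * l₂`, which nearly cancels `X * l₁`. -/
lemma le_abs_and_le_abs_of_abs_mul_add_mul_le (hK : 100 ≤ K) (hμ : K ≤ μ) (hr : 0 < r)
    (hrN : r ≤ N) (hrμ : r * r = μ * N * K ^ 2) (hX : 2 * r ≤ |X|) (hY : |Y| ≤ 2 * N)
    (hsum : |X * l₁ + Y * l₂| ≤ 2 * (K * N)) (hl₁ : r ≤ 3 * K * |l₁|) :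
    μ ≤ |l₁| ∧ μ ≤ |l₂| := by
  have hN : 0 < N := hr.trans_le hrN
  have hμr : μ * K ^ 2 ≤ r := by
    refine le_of_mul_le_mul_right ?_ hN
    calc μ * K ^ 2 * N = r * r := by rw [hrμ]; ring
      _ ≤ r * N := by gcongr
  constructor
  · refine le_of_mul_le_mul_left ?_ (show 0 < 3 * K by linarith)
    exact le_trans (by nlinarith) hl₁
  · have hXl : 2 * (μ * N * K ^ 2) ≤ 3 * K * |X * l₁| := by
      rw [← hrμ, abs_mul]
      calc 2 * (r * r) = 2 * r * r := by ring
        _ ≤ |X| * (3 * K * |l₁|) := by gcongr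
        _ = 3 * K * (|X| * |l₁|) := by ring
    have hYl : |Y * l₂| ≤ 2 * N * |l₂| := by
      rw [abs_mul]
      gcongr
    have htri : |X * l₁| ≤ 2 * (K * N) + |Y * l₂| := by
      have := abs_sub (X * l₁ + Y * l₂) (Y * l₂)
      rw [add_sub_cancel_right] at this
      linarith
    have hcancel : N * K * (2 * (μ * K)) ≤ N * K * (6 * (K + |l₂|)) := by
      calc N * K * (2 * (μ * K)) = 2 * (μ * N * K ^ 2) := by ring
        _ ≤ 3 * K * (2 * (K * N) + 2 * N * |l₂|) := by
            refine hXl.trans (mul_le_mul_of_nonneg_left (by linarith) (by linarith))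
        _ = N * K * (6 * (K + |l₂|)) := by ring
    have := le_of_mul_le_mul_left hcancel (by positivity)
    nlinarith

lemma abs_sub_fst_le (hcoef : |(α : ℝ)| + |(β : ℝ)| + |(γ : ℝ)| ≤ K)
    (hdisc : β ^ 2 - 4 * α * γ ≠ 0) (d : ℤ × ℤ) :
    |(d.1 : ℝ)| ≤ 2 * K * |derivFst α β d| + K * |derivSnd β γ d| := by
  have hD : (1 : ℝ) ≤ |((β ^ 2 - 4 * α * γ : ℤ) : ℝ)| :=
    mod_cast Int.one_le_abs hdisc
  have hα := abs_nonneg (α : ℝ)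
  have hβ := abs_nonneg (β : ℝ)
  have hγ := abs_nonneg (γ : ℝ)
  calc |(d.1 : ℝ)| ≤ |((β ^ 2 - 4 * α * γ : ℤ) : ℝ)| * |(d.1 : ℝ)| :=
        le_mul_of_one_le_left (abs_nonneg _) hD
    _ = |β * derivSnd β γ d - 2 * γ * derivFst α β d| := by
        rw [← abs_mul]
        congr 1
        simp only [derivFst, derivSnd]
        push_cast
        ring
    _ ≤ |(β : ℝ)| * |derivSnd β γ d| + 2 * |(γ : ℝ)| * |derivFst α β d| := by
        refine (abs_sub _ _).trans_eq ?_
        rw [abs_mul, abs_mul, abs_mul, abs_two]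
    _ ≤ K * |derivSnd β γ d| + 2 * K * |derivFst α β d| := by
        gcongr <;> linarith
    _ = 2 * K * |derivFst α β d| + K * |derivSnd β γ d| := add_comm _ _

lemma IsFrostman.le_abs_derivFst_and_le_abs_derivSnd (hF : IsFrostman A N s K) (hK : 100 ≤ K)
    (hcoef : |(α : ℝ)| + |(β : ℝ)| + |(γ : ℝ)| ≤ K) (hdisc : β ^ 2 - 4 * α * γ ≠ 0)
    (hN : K ^ (2 * q + 3) ≤ N) (hw : w ∈ nearCollisions α β γ A (K * N) (N / K ^ q)) :
    N / K ^ (2 * q + 2) ≤ |derivFst α β (w.1 - w.2)| ∧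
      N / K ^ (2 * q + 2) ≤ |derivSnd β γ (w.1 - w.2)| := by
  have : 0 < K := by linarith
  have hN0 := hF.pos
  have hr : 0 < N / K ^ q := by positivity
  have hrN : N / K ^ q ≤ N := div_le_self hN0.le (one_le_pow₀ (by linarith))
  have hμ : K ≤ N / K ^ (2 * q + 2) := by
    rw [le_div_iff₀ (by positivity)]
    exact le_trans (by ring_nf; rfl) hN
  have hrμ : N / K ^ q * (N / K ^ q) = N / K ^ (2 * q + 2) * N * K ^ 2 := by
    rw [pow_add, pow_mul']
    field_simp
  have hsum := abs_add_mul_derivFst_add_add_mul_derivSnd_le hw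
  obtain ⟨h₁, h₂, -, ⟨hx, hy, hx', hy'⟩, hd, -⟩ := mem_nearCollisions.1 hw
  rw [Finset.mem_product] at h₁ h₂
  have hX : |(w.1.1 + w.2.1 : ℝ)| = w.1.1 + w.2.1 := abs_of_nonneg (by linarith)
  have hY : |(w.1.2 + w.2.2 : ℝ)| = w.1.2 + w.2.2 := abs_of_nonneg (by linarith)
  have hbound : N / K ^ q ≤
      2 * K * |derivFst α β (w.1 - w.2)| + K * |derivSnd β γ (w.1 - w.2)| := by
    refine le_trans ?_ (abs_sub_fst_le hcoef hdisc _)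
    simpa only [Prod.fst_sub, Int.cast_sub] using hd
  have hxN := (hF.mem_Icc _ h₁.1).2
  have hyN := (hF.mem_Icc _ h₁.2).2
  have hxN' := (hF.mem_Icc _ h₂.1).2
  have hyN' := (hF.mem_Icc _ h₂.2).2
  rcases le_total |derivSnd β γ (w.1 - w.2)| |derivFst α β (w.1 - w.2)| with hle | hle
  · refine le_abs_and_le_abs_of_abs_mul_add_mul_le hK hμ hr hrN hrμ ?_ ?_ hsum (by nlinarith)
    · rw [hX]; linarith
    · rw [hY]; linarith
  · rw [add_comm] at hsum
    refine (le_abs_and_le_abs_of_abs_mul_add_mul_le hK hμ hr hrN hrμ ?_ ?_ hsum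
      (by nlinarith)).symm
    · rw [hY]; linarith
    · rw [hX]; linarith

lemma card_fiber_le (hK : 100 ≤ K) (hN : 0 < N) {b : ℕ} {d : ℤ × ℤ} {x : ℤ}
    (hd : N / K ^ b ≤ |derivSnd β γ d|) {I : Finset ((ℤ × ℤ) × (ℤ × ℤ))}
    (hI : I ⊆ nearCollisions α β γ A (K * N) r) (hId : ∀ w ∈ I, w.1 - w.2 = d)
    (hIx : ∀ w ∈ I, w.2.1 = x) : (I.card : ℝ) ≤ K ^ (b + 2) := by
  have : 0 < K := by linarith
  have hl : 0 < |derivSnd β γ d| := lt_of_lt_of_le (by positivity) hd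
  have hinj : Set.InjOn (fun w : (ℤ × ℤ) × (ℤ × ℤ) => w.2.2) I := by
    intro w hw w' hw' h
    have h₂ : w.2 = w'.2 := Prod.ext ((hIx w hw).trans (hIx w' hw').symm) h
    exact Prod.ext (sub_left_injective (b := w.2) <| by
      simpa only [h₂] using (hId w hw).trans (hId w' hw').symm) h₂
  have hclose : ∀ y ∈ I.image fun w => w.2.2, ∀ y' ∈ I.image fun w => w.2.2,
      |((y : ℤ) : ℝ) - (y' : ℤ)| ≤ 2 * K ^ (b + 1) := by
    simp only [Finset.forall_mem_image]
    intro w hw w' hw'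
    have hsum := abs_add_mul_derivFst_add_add_mul_derivSnd_le (hI hw)
    have hsum' := abs_add_mul_derivFst_add_add_mul_derivSnd_le (hI hw')
    rw [show w.1 = d + w.2 from sub_eq_iff_eq_add.1 (hId w hw)] at hsum
    rw [show w'.1 = d + w'.2 from sub_eq_iff_eq_add.1 (hId w' hw')] at hsum'
    simp only [add_sub_cancel_right, Prod.fst_add, Prod.snd_add, Int.cast_add, hIx w hw,
      hIx w' hw'] at hsum hsum'
    have hmul : |(w.2.2 : ℝ) - w'.2.2| * |derivSnd β γ d| ≤ 2 * (K * N) := by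
      rw [← abs_mul, abs_le]
      rw [abs_le] at hsum hsum'
      constructor <;> nlinarith
    calc |(w.2.2 : ℝ) - w'.2.2| ≤ 2 * (K * N) / |derivSnd β γ d| := (le_div_iff₀ hl).2 hmul
      _ ≤ 2 * (K * N) / (N / K ^ b) := by gcongr
      _ = 2 * K ^ (b + 1) := by rw [pow_succ]; field_simp
  rw [← Finset.card_image_of_injOn hinj]
  refine (card_le_of_abs_sub_le (by positivity) hclose).trans ?_
  nlinarith [one_le_pow₀ (n := b + 1) (show 1 ≤ K by linarith), pow_succ K (b + 1)]

end Differences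

section Popular

variable {ι κ : Type*} [DecidableEq κ]

lemma exists_popular_subset (Ω : Finset ι) (g : ι → κ) :
    ∃ Ω' ⊆ Ω, (Ω.card : ℝ) ≤ 2 * Ω'.card ∧
      ∀ w ∈ Ω', (Ω.card : ℝ) ≤ 2 * (Ω.image g).card * (Ω.filter (g · = g w)).card := by
  set P := fun w => (Ω.card : ℝ) ≤ 2 * (Ω.image g).card * (Ω.filter (g · = g w)).card
  refine ⟨Ω.filter P, Finset.filter_subset _ _, ?_, fun w hw => (Finset.mem_filter.1 hw).2⟩
  rcases Ω.eq_empty_or_nonempty with rfl | hΩ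
  · simp
  have : (0 : ℝ) < (Ω.image g).card := mod_cast (hΩ.image g).card_pos
  have hfiber (c : κ) : (((Ω.filter (¬ P ·)).filter (g · = c)).card : ℝ) ≤
      Ω.card / (2 * (Ω.image g).card) := by
    rcases ((Ω.filter (¬ P ·)).filter (g · = c)).eq_empty_or_nonempty with h | ⟨w, hw⟩
    · rw [h, Finset.card_empty, Nat.cast_zero]
      positivity
    · rw [Finset.mem_filter, Finset.mem_filter] at hw
      obtain ⟨⟨-, hw⟩, rfl⟩ := hw
      rw [le_div_iff₀ (by positivity), mul_comm]
      refine le_trans ?_ (not_le.1 hw).le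
      gcongr
      exact Finset.filter_subset _ _
  have hunpopular : 2 * ((Ω.filter (¬ P ·)).card : ℝ) ≤ Ω.card := by
    calc 2 * ((Ω.filter (¬ P ·)).card : ℝ)
        ≤ 2 * (Ω.card / (2 * (Ω.image g).card) * ((Ω.filter (¬ P ·)).image g).card) := by
          gcongr
          exact card_le_mul_card_image_of_fiber_le _ g hfiber
      _ ≤ 2 * (Ω.card / (2 * (Ω.image g).card) * (Ω.image g).card) := by
          gcongr
          exact Finset.filter_subset _ _
      _ = Ω.card := by field_simp
  have hsplit : ((Ω.filter P).card : ℝ) + (Ω.filter (¬ P ·)).card = Ω.card :=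
    mod_cast Finset.card_filter_add_card_filter_not (s := Ω) P
  linarith

lemma exists_card_le_mul_card_fiber {Ω : Finset ι} {T : Finset κ} {g : ι → κ}
    (hT : T.Nonempty) (hg : ∀ w ∈ Ω, g w ∈ T) :
    ∃ c ∈ T, (Ω.card : ℝ) ≤ T.card * (Ω.filter (g · = c)).card := by
  have hT0 : (0 : ℝ) < T.card := mod_cast hT.card_pos
  obtain ⟨c, hc, h⟩ := Finset.exists_le_card_fiber_of_nsmul_le_card_of_maps_to
    (b := (Ω.card / T.card : ℝ)) hg hT (by rw [nsmul_eq_mul, mul_div_cancel₀ _ hT0.ne'])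
  exact ⟨c, hc, (div_le_iff₀' hT0).1 h⟩

end Popular

section Graph

variable {A S : Finset ℤ} {K c t R : ℝ} {a r : ℕ}

/-- By Ruzsa covering, a linear map nearly sending a large part of `A` into `A` does so on all of
`A` up to few translates. -/
lemma IsMultiplier.of_near (hA : SmallDoubling A K) (hS : S ⊆ A)
    (hcard : (A.card : ℝ) ≤ K ^ a * S.card) (hR : 0 ≤ R) (hRK : 4 * R + 3 ≤ K ^ r)
    (h : ∀ x ∈ S, ∃ y ∈ A, |c * x + y - t| ≤ R) : IsMultiplier A K (a + r + 4) c := by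
  have hK := hA.pos
  have hSne : S.Nonempty := by
    rw [Finset.nonempty_iff_ne_empty]
    rintro rfl
    simpa using hA.card_pos.trans_le hcard
  have hAS : ((A + S).card : ℝ) ≤ K ^ (a + 1) * S.card := by
    calc ((A + S).card : ℝ) ≤ (A + A).card :=
          mod_cast Finset.card_le_card (Finset.add_subset_add_left hS)
      _ ≤ K * (K ^ a * S.card) := hA.card_add_self_le.trans (by gcongr)
      _ = K ^ (a + 1) * S.card := by ring
  obtain ⟨X, -, hX, hcover⟩ := Finset.ruzsa_covering_add hSne hAS
  rw [show a + r + 4 = a + 1 + r + (2 * 1 + 1) by ring]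
  refine of_approx hA (Z := X.image fun x : ℤ => c * x) (R := 2 * R)
    ((Nat.cast_le.2 Finset.card_image_le).trans hX) (by positivity) (by linarith) fun b hb => ?_
  obtain ⟨x, hx, u, hu, rfl⟩ := Finset.mem_add.1 (hcover hb)
  obtain ⟨p, hp, q, hq, rfl⟩ := Finset.mem_sub.1 hu
  obtain ⟨y, hy, hpy⟩ := h p hp
  obtain ⟨z, hz, hqz⟩ := h q hq
  refine ⟨c * x, Finset.mem_image_of_mem _ hx, z - y, ?_, ?_⟩
  · simpa only [one_nsmul] using Finset.sub_mem_sub hz hy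
  · push_cast
    rw [abs_le] at *
    constructor <;> linarith

end Graph

section Ratios

variable {A : Finset ℤ} {K N r : ℝ} {α β γ : ℤ} {a b : ℕ} {d : ℤ × ℤ}

/-- The differences of the pairs of points with a popular difference `d` all satisfy nearly the
same linear equation, whose coefficients are the partial derivatives of the form at `d`. -/
lemma isMultiplier_derivFst_div_derivSnd (hA : SmallDoubling A K) (hN : 0 < N)
    (hd : N / K ^ b ≤ |derivSnd β γ d|) {I : Finset ((ℤ × ℤ) × (ℤ × ℤ))}
    (hI : I ⊆ nearCollisions α β γ A (K * N) r) (hId : ∀ w ∈ I, w.1 - w.2 = d)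
    (hcard : (A.card : ℝ) ≤ K ^ a * I.card) :
    IsMultiplier A K (a + 2 * b + 8) (derivFst α β d / derivSnd β γ d) := by
  have hK := hA.pos
  have hl : 0 < |derivSnd β γ d| := lt_of_lt_of_le (by positivity) hd
  have hl0 : derivSnd β γ d ≠ 0 := abs_pos.1 hl
  have hmem (w) (hw : w ∈ I) := (mem_nearCollisions.1 (hI hw)).2.1
  simp only [Finset.mem_product] at hmem
  have hfiber (x : ℤ) : ((I.filter (·.2.1 = x)).card : ℝ) ≤ K ^ (b + 2) :=
    card_fiber_le hA.hundred_le hN hd ((Finset.filter_subset _ _).trans hI)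
      (fun w hw => hId w (Finset.mem_filter.1 hw).1) fun w hw => (Finset.mem_filter.1 hw).2
  rw [show a + 2 * b + 8 = (a + (b + 2)) + (b + 2) + 4 by ring]
  refine IsMultiplier.of_near (S := I.image (·.2.1)) (R := K ^ (b + 1))
    (t := -(d.1 * (derivFst α β d / derivSnd β γ d) + d.2) / 2) hA
    (Finset.image_subset_iff.2 fun w hw => (hmem w hw).1) ?_ (by positivity) ?_ ?_
  · calc (A.card : ℝ) ≤ K ^ a * (K ^ (b + 2) * (I.image (·.2.1)).card) := by
          refine hcard.trans ?_
          gcongr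
          exact card_le_mul_card_image_of_fiber_le I _ hfiber
      _ = K ^ (a + (b + 2)) * (I.image (·.2.1)).card := by ring
  · nlinarith [hA.hundred_le, one_le_pow₀ (n := b + 1) hA.one_le, pow_succ K (b + 1)]
  · simp only [Finset.forall_mem_image]
    intro w hw
    refine ⟨w.2.2, (hmem w hw).2, ?_⟩
    have hsum := abs_add_mul_derivFst_add_add_mul_derivSnd_le (hI hw)
    rw [show w.1 = d + w.2 from sub_eq_iff_eq_add.1 (hId w hw)] at hsum
    simp only [add_sub_cancel_right, Prod.fst_add, Prod.snd_add, Int.cast_add] at hsum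
    rw [show derivFst α β d / derivSnd β γ d * w.2.1 + w.2.2 -
        -(d.1 * (derivFst α β d / derivSnd β γ d) + d.2) / 2 =
        ((d.1 + w.2.1 + w.2.1) * derivFst α β d + (d.2 + w.2.2 + w.2.2) * derivSnd β γ d) /
          (2 * derivSnd β γ d) by field_simp; ring, abs_div, abs_mul, abs_two]
    calc _ ≤ 2 * (K * N) / (2 * |derivSnd β γ d|) := by gcongr
      _ ≤ 2 * (K * N) / (2 * (N / K ^ b)) := by gcongr
      _ = K ^ (b + 1) := by rw [pow_succ]; field_simp

lemma abs_discrim_le (hK : 2 ≤ K) (hcoef : |(α : ℝ)| + |(β : ℝ)| + |(γ : ℝ)| ≤ K) :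
    |((β ^ 2 - 4 * α * γ : ℤ) : ℝ)| ≤ K ^ 3 := by
  have hα := abs_nonneg (α : ℝ)
  have hβ := abs_nonneg (β : ℝ)
  have hγ := abs_nonneg (γ : ℝ)
  push_cast
  calc |(β : ℝ) ^ 2 - 4 * α * γ| ≤ |(β : ℝ)| ^ 2 + 4 * |(α : ℝ)| * |(γ : ℝ)| := by
        refine (abs_sub _ _).trans_eq ?_
        rw [abs_pow, abs_mul, abs_mul, abs_of_pos (four_pos (α := ℝ))]
    _ ≤ 2 * K ^ 2 := by nlinarith [sq_nonneg (|(α : ℝ)| - |(γ : ℝ)|)]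
    _ ≤ K ^ 3 := by nlinarith [sq_nonneg K]

lemma sub_mul_derivFst_div_derivSnd (hl : derivSnd β γ d ≠ 0) :
    β - 2 * γ * (derivFst α β d / derivSnd β γ d) =
      ((β ^ 2 - 4 * α * γ : ℤ) : ℝ) * d.1 / derivSnd β γ d := by
  field_simp
  simp only [derivFst, derivSnd]
  push_cast
  ring

lemma mul_derivFst_div_derivSnd_sub (hl : derivSnd β γ d ≠ 0) :
    β * (derivFst α β d / derivSnd β γ d) - 2 * α =
      ((β ^ 2 - 4 * α * γ : ℤ) : ℝ) * d.2 / derivSnd β γ d := by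
  field_simp
  simp only [derivFst, derivSnd]
  push_cast
  ring

/-- The ratio of the coordinates of `d` is a Möbius transform of the ratio of the partial
derivatives. -/
lemma exists_isMultiplier_div (hdisc : β ^ 2 - 4 * α * γ ≠ 0) (i b : ℕ) :
    ∃ j : ℕ, ∀ (A : Finset ℤ) (K : ℝ) (d : ℤ × ℤ), SmallDoubling A K →
      |(α : ℝ)| + |(β : ℝ)| + |(γ : ℝ)| ≤ K → derivSnd β γ d ≠ 0 →
      |derivSnd β γ d| ≤ K ^ b * |(d.2 : ℝ)| → |(d.1 : ℝ)| ≤ K ^ b * |derivSnd β γ d| →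
      IsMultiplier A K i (derivFst α β d / derivSnd β γ d) →
      IsMultiplier A K j ((d.1 : ℝ) / d.2) := by
  -- Unification fills in the exponent produced by the multiplier calculus.
  refine ⟨?_, fun A K d hA hcoef hl0 hlk hhl hc => ?_⟩
  on_goal 2 =>
    set D : ℝ := ((β ^ 2 - 4 * α * γ : ℤ) : ℝ) with hD
    set l := derivSnd β γ d
    set c := derivFst α β d / l
    have hD1 : 1 ≤ |D| := by
      rw [hD]
      exact_mod_cast Int.one_le_abs hdisc
    have hK := hA.hundred_le
    have hl : 0 < |l| := abs_pos.2 hl0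
    have hnum : β - 2 * γ * c = D * d.1 / l := sub_mul_derivFst_div_derivSnd hl0
    have hden : β * c - 2 * α = D * d.2 / l := mul_derivFst_div_derivSnd_sub hl0
    have hratio : (d.1 : ℝ) / d.2 = (β - 2 * γ * c) * (β * c - 2 * α)⁻¹ := by
      have : D ≠ 0 := abs_pos.1 (by linarith)
      rw [hnum, hden]
      field_simp
    have hα0 := abs_nonneg (α : ℝ)
    have hβ0 := abs_nonneg (β : ℝ)
    have hγ0 := abs_nonneg (γ : ℝ)
    have hβK : |(β : ℝ)| ≤ K ^ 1 := by linarith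
    have h2γK : |(2 * γ : ℝ)| ≤ K ^ 2 := by rw [abs_mul, abs_two]; nlinarith
    have h2α := IsMultiplier.intCast hA (2 * α)
    have h2γ := IsMultiplier.intCast hA (2 * γ)
    have hβ := IsMultiplier.intCast hA β
    push_cast at h2α h2γ
    rw [hratio]
    refine IsMultiplier.mul (b := b + 3) hA ?_ (hβ.sub hA (h2γ.mul hA h2γK hc))
      (((hβ.mul hA hβK hc).sub hA h2α).inv (b := b) hK ?_)
    · rw [hnum, abs_div, abs_mul, div_le_iff₀ hl, pow_add]
      calc |D| * |(d.1 : ℝ)| ≤ K ^ 3 * (K ^ b * |l|) := by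
            gcongr
            exact abs_discrim_le (by linarith) hcoef
        _ = K ^ b * K ^ 3 * |l| := by ring
    · rw [hden, abs_div, abs_mul, mul_div_assoc', one_le_div hl]
      calc |l| ≤ K ^ b * |(d.2 : ℝ)| := hlk
        _ ≤ K ^ b * (|D| * |(d.2 : ℝ)|) := by
            gcongr
            exact le_mul_of_one_le_left (abs_nonneg _) hD1

end Ratios

section RichDirections

variable {A : Finset ℤ} {K N s : ℝ} {α β γ : ℤ} {q : ℕ} {d : ℤ × ℤ}
  {Ω : Finset ((ℤ × ℤ) × (ℤ × ℤ))}

lemma exists_popular_differences (hA : SmallDoubling A K)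
    (hΩA : ∀ w ∈ Ω, w.1 ∈ A ×ˢ A ∧ w.2 ∈ A ×ˢ A) (hΩ : (A.card : ℝ) ^ 3 ≤ 8 * K * Ω.card) :
    ∃ Ω' ⊆ Ω, (A.card : ℝ) ^ 3 ≤ 16 * K * Ω'.card ∧ ∀ w ∈ Ω',
      (A.card : ℝ) ≤ K ^ 6 * (Ω.filter fun w' => w'.1 - w'.2 = w.1 - w.2).card := by
  obtain ⟨Ω', hsub, hcard, hpop⟩ := exists_popular_subset Ω fun w => w.1 - w.2
  have hK := hA.pos
  have hA0 := hA.card_pos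
  refine ⟨Ω', hsub, hΩ.trans (by nlinarith), fun w hw => ?_⟩
  have hdiff : ((A - A).card : ℝ) ≤ K ^ 2 * A.card := by
    simpa only [one_nsmul] using hA.card_nsmul_sub_nsmul_le 1 1
  have himage : ((Ω.image fun w => w.1 - w.2).card : ℝ) ≤ K ^ 4 * (A.card : ℝ) ^ 2 := by
    have hmem : (Ω.image fun w => w.1 - w.2) ⊆ (A - A) ×ˢ (A - A) := by
      refine Finset.image_subset_iff.2 fun w hw => ?_
      obtain ⟨h₁, h₂⟩ := hΩA w hw
      rw [Finset.mem_product] at h₁ h₂ ⊢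
      exact ⟨Finset.sub_mem_sub h₁.1 h₂.1, Finset.sub_mem_sub h₁.2 h₂.2⟩
    calc ((Ω.image fun w => w.1 - w.2).card : ℝ) ≤ (A - A).card * (A - A).card := by
          rw [← Nat.cast_mul, ← Finset.card_product]
          exact_mod_cast Finset.card_le_card hmem
      _ ≤ K ^ 2 * A.card * (K ^ 2 * A.card) := by gcongr
      _ = K ^ 4 * (A.card : ℝ) ^ 2 := by ring
  set F := Ω.filter fun w' => w'.1 - w'.2 = w.1 - w.2
  refine le_of_mul_le_mul_left ?_ (pow_pos hA0 2)
  calc (A.card : ℝ) ^ 2 * A.card = (A.card : ℝ) ^ 3 := by ring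
    _ ≤ 8 * K * (2 * (Ω.image fun w => w.1 - w.2).card * F.card) := by
        refine hΩ.trans ?_
        gcongr
        exact hpop w hw
    _ ≤ 8 * K * (2 * (K ^ 4 * (A.card : ℝ) ^ 2) * F.card) := by gcongr
    _ = 16 * (K ^ 5 * (A.card : ℝ) ^ 2 * F.card) := by ring
    _ ≤ K * (K ^ 5 * (A.card : ℝ) ^ 2 * F.card) := by gcongr; linarith [hA.hundred_le]
    _ = (A.card : ℝ) ^ 2 * (K ^ 6 * F.card) := by ring

lemma exists_card_le_mul_card_filter (hA : SmallDoubling A K)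
    (hΩA : ∀ w ∈ Ω, w.1 ∈ A ×ˢ A ∧ w.2 ∈ A ×ˢ A) (hΩ : (A.card : ℝ) ^ 3 ≤ 16 * K * Ω.card) :
    ∃ k x : ℤ, (A.card : ℝ) ≤
      K ^ 4 * (Ω.filter fun w => w.1.2 - w.2.2 = k ∧ w.2.1 = x).card := by
  have hK := hA.pos
  have hA0 := hA.card_pos
  have hmaps : ∀ w ∈ Ω, (w.1.2 - w.2.2, w.2.1) ∈ (A - A) ×ˢ A := by
    intro w hw
    obtain ⟨h₁, h₂⟩ := hΩA w hw
    rw [Finset.mem_product] at h₁ h₂ ⊢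
    exact ⟨Finset.sub_mem_sub h₁.2 h₂.2, h₂.1⟩
  obtain ⟨⟨k, x⟩, -, h⟩ := exists_card_le_mul_card_fiber
    ((hA.nonempty.sub hA.nonempty).product hA.nonempty) hmaps
  simp only [Prod.mk.injEq, Finset.card_product, Nat.cast_mul] at h
  refine ⟨k, x, ?_⟩
  set F := Ω.filter fun w => w.1.2 - w.2.2 = k ∧ w.2.1 = x
  have hdiff : ((A - A).card : ℝ) ≤ K ^ 2 * A.card := by
    simpa only [one_nsmul] using hA.card_nsmul_sub_nsmul_le 1 1
  refine le_of_mul_le_mul_left ?_ (pow_pos hA0 2)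
  calc (A.card : ℝ) ^ 2 * A.card = (A.card : ℝ) ^ 3 := by ring
    _ ≤ 16 * K * ((A - A).card * A.card * F.card) := by
        refine hΩ.trans ?_
        gcongr
    _ ≤ 16 * K * (K ^ 2 * A.card * A.card * F.card) := by gcongr
    _ = 16 * (K ^ 3 * (A.card : ℝ) ^ 2 * F.card) := by ring
    _ ≤ K * (K ^ 3 * (A.card : ℝ) ^ 2 * F.card) := by gcongr; linarith [hA.hundred_le]
    _ = (A.card : ℝ) ^ 2 * (K ^ 4 * F.card) := by ring

lemma abs_derivSnd_le (hK : 2 ≤ K) (hcoef : |(α : ℝ)| + |(β : ℝ)| + |(γ : ℝ)| ≤ K)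
    (hd₁ : |(d.1 : ℝ)| ≤ N) (hd₂ : |(d.2 : ℝ)| ≤ N) : |derivSnd β γ d| ≤ K ^ 2 * N := by
  have hN := (abs_nonneg _).trans hd₁
  have hα := abs_nonneg (α : ℝ)
  have hβ := abs_nonneg (β : ℝ)
  have : 0 ≤ |(γ : ℝ)| := abs_nonneg _
  calc |derivSnd β γ d| ≤ |(β : ℝ)| * |(d.1 : ℝ)| + 2 * |(γ : ℝ)| * |(d.2 : ℝ)| := by
        refine (abs_add_le _ _).trans_eq ?_
        rw [abs_mul, abs_mul, abs_mul, abs_two]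
    _ ≤ |(β : ℝ)| * N + 2 * |(γ : ℝ)| * N := by gcongr
    _ = (|(β : ℝ)| + 2 * |(γ : ℝ)|) * N := by ring
    _ ≤ K ^ 2 * N := by gcongr; nlinarith

lemma card_le_mul_card_image_fst (hA : SmallDoubling A K) (hF : IsFrostman A N s K)
    (hcoef : |(α : ℝ)| + |(β : ℝ)| + |(γ : ℝ)| ≤ K) (hdisc : β ^ 2 - 4 * α * γ ≠ 0)
    (hN : K ^ (2 * q + 3) ≤ N) (hΩ : Ω ⊆ nearCollisions α β γ A (K * N) (N / K ^ q)) (k x : ℤ)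
    (hΩkx : ∀ w ∈ Ω, w.1.2 - w.2.2 = k ∧ w.2.1 = x) :
    (Ω.card : ℝ) ≤ K ^ (2 * q + 4) * (Ω.image fun w => w.1.1).card := by
  refine card_le_mul_card_image_of_fiber_le Ω _ fun c => ?_
  rcases (Ω.filter (·.1.1 = c)).eq_empty_or_nonempty with h | ⟨w, hw⟩
  · rw [h, Finset.card_empty, Nat.cast_zero]
    exact pow_nonneg hA.pos.le _
  have hdiff : ∀ w ∈ Ω.filter (·.1.1 = c), w.1 - w.2 = (c - x, k) := by
    intro w hw
    rw [Finset.mem_filter] at hw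
    exact Prod.ext (by rw [Prod.fst_sub, hw.2, (hΩkx w hw.1).2]) (hΩkx w hw.1).1
  refine card_fiber_le hA.hundred_le hF.pos (d := (c - x, k)) (x := x) ?_
    ((Finset.filter_subset _ _).trans hΩ) hdiff
    fun w hw => (hΩkx w (Finset.mem_filter.1 hw).1).2
  rw [← hdiff w hw]
  exact (hF.le_abs_derivFst_and_le_abs_derivSnd hA.hundred_le hcoef hdisc hN
    (hΩ (Finset.mem_filter.1 hw).1)).2

lemma exists_isMultiplier_of_popular (hdisc : β ^ 2 - 4 * α * γ ≠ 0) (q : ℕ) :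
    ∃ j : ℕ, ∀ (A : Finset ℤ) (K N s : ℝ) (w : (ℤ × ℤ) × (ℤ × ℤ)), SmallDoubling A K →
      IsFrostman A N s K → |(α : ℝ)| + |(β : ℝ)| + |(γ : ℝ)| ≤ K → K ^ (2 * q + 3) ≤ N →
      w ∈ nearCollisions α β γ A (K * N) (N / K ^ q) →
      (A.card : ℝ) ≤ K ^ 6 * ((nearCollisions α β γ A (K * N) (N / K ^ q)).filter
        fun w' => w'.1 - w'.2 = w.1 - w.2).card →
      IsMultiplier A K j (((w.1.1 : ℝ) - w.2.1) / (w.1.2 - w.2.2 : ℤ)) := by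
  obtain ⟨j, hj⟩ := exists_isMultiplier_div hdisc (6 + 2 * (2 * q + 2) + 8) (2 * q + 2)
  refine ⟨j, fun A K N s w hA hF hcoef hN hw hpop => ?_⟩
  have hK := hA.pos
  have hN0 := hF.pos
  obtain ⟨h₁, h₂, -, -, -, hk⟩ := mem_nearCollisions.1 hw
  rw [Finset.mem_product] at h₁ h₂
  have hd₁ : |((w.1 - w.2).1 : ℝ)| ≤ N := by
    rw [Prod.fst_sub, Int.cast_sub]
    exact hF.abs_sub_le h₁.1 h₂.1
  have hd₂ : |((w.1 - w.2).2 : ℝ)| ≤ N := by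
    rw [Prod.snd_sub, Int.cast_sub]
    exact hF.abs_sub_le h₁.2 h₂.2
  have hNk : N ≤ K ^ q * |((w.1 - w.2).2 : ℝ)| := by
    rw [div_le_iff₀' (by positivity)] at hk
    rwa [Prod.snd_sub, Int.cast_sub]
  have hl := (hF.le_abs_derivFst_and_le_abs_derivSnd hA.hundred_le hcoef hdisc hN hw).2
  have hc := isMultiplier_derivFst_div_derivSnd hA hN0 (α := α) hl (Finset.filter_subset _ _)
    (fun w hw => (Finset.mem_filter.1 hw).2) hpop
  rw [← Int.cast_sub]
  refine hj A K (w.1 - w.2) hA hcoef (abs_pos.1 (lt_of_lt_of_le (by positivity) hl)) ?_ ?_ hc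
  · calc |derivSnd β γ (w.1 - w.2)| ≤ K ^ 2 * N :=
          abs_derivSnd_le (by linarith [hA.hundred_le]) hcoef hd₁ hd₂
      _ ≤ K ^ 2 * (K ^ q * |((w.1 - w.2).2 : ℝ)|) := by gcongr
      _ = K ^ (q + 2) * |((w.1 - w.2).2 : ℝ)| := by ring
      _ ≤ K ^ (2 * q + 2) * |((w.1 - w.2).2 : ℝ)| := by
          gcongr
          · exact hA.one_le
          · omega
  · exact hd₁.trans ((div_le_iff₀' (by positivity)).1 hl)

lemma exists_subset_nearCollisions (hA : SmallDoubling A K) (hF : IsFrostman A N s K)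
    (hcoef : |(α : ℝ)| + |(β : ℝ)| + |(γ : ℝ)| ≤ K) (hdisc : β ^ 2 - 4 * α * γ ≠ 0)
    (hN : K ^ (2 * q + 3) ≤ N) (hΩ : Ω = nearCollisions α β γ A (K * N) (N / K ^ q))
    (hcard : (A.card : ℝ) ^ 3 ≤ 8 * K * Ω.card) :
    ∃ W ⊆ Ω, ∃ k x : ℤ, (∀ w ∈ W, w.1.2 - w.2.2 = k ∧ w.2.1 = x ∧
        (A.card : ℝ) ≤ K ^ 6 * (Ω.filter fun w' => w'.1 - w'.2 = w.1 - w.2).card) ∧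
      (A.card : ℝ) ≤ K ^ (2 * q + 8) * (W.image fun w => w.1.1).card := by
  have hΩA (w) (hw : w ∈ Ω) : w.1 ∈ A ×ˢ A ∧ w.2 ∈ A ×ˢ A := by
    rw [hΩ] at hw
    exact ⟨(mem_nearCollisions.1 hw).1, (mem_nearCollisions.1 hw).2.1⟩
  obtain ⟨Ω', hΩ', hcard', hpop⟩ := exists_popular_differences hA hΩA hcard
  obtain ⟨k, x, hkx⟩ := exists_card_le_mul_card_filter hA (fun w hw => hΩA w (hΩ' hw)) hcard'
  set W := Ω'.filter fun w => w.1.2 - w.2.2 = k ∧ w.2.1 = x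
  have hW (w) (hw : w ∈ W) : w ∈ Ω' ∧ w.1.2 - w.2.2 = k ∧ w.2.1 = x := Finset.mem_filter.1 hw
  have hWΩ : W ⊆ Ω := (Finset.filter_subset _ _).trans hΩ'
  refine ⟨W, hWΩ, k, x, fun w hw => ⟨(hW w hw).2.1, (hW w hw).2.2, hpop w (hW w hw).1⟩, ?_⟩
  have hfst := card_le_mul_card_image_fst hA hF hcoef hdisc hN (hΩ ▸ hWΩ) k x
    fun w hw => (hW w hw).2
  have hK := hA.pos
  calc (A.card : ℝ) ≤ K ^ 4 * (K ^ (2 * q + 4) * (W.image fun w => w.1.1).card) :=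
        hkx.trans (by gcongr)
    _ = K ^ (2 * q + 8) * (W.image fun w => w.1.1).card := by ring

lemma exists_isMultiplier_sub_div (κ : Type*) (hs : 0 < s) (hdisc : β ^ 2 - 4 * α * γ ≠ 0) :
    ∃ J : ℕ, ∀ (A : Finset ℤ) (K N : ℝ) (f : ℤ × ℤ → κ), SmallDoubling A K →
      IsFrostman A N s K → |(α : ℝ)| + |(β : ℝ)| + |(γ : ℝ)| ≤ K →
      IsValueColoring A α β γ K N f → K ^ J ≤ N →
      ∃ A' ⊆ A, ∃ x k : ℤ, (A.card : ℝ) ≤ K ^ J * A'.card ∧ |(k : ℝ)| ≤ N ∧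
        N ≤ K ^ J * |(k : ℝ)| ∧ ∀ a ∈ A', IsMultiplier A K J ((a - x) / k) := by
  obtain ⟨q, hq⟩ := exists_card_cube_le_mul_card_nearCollisions κ hs hdisc
  obtain ⟨j, hj⟩ := exists_isMultiplier_of_popular hdisc q
  refine ⟨j + 2 * q + 8, fun A K N f hA hF hcoef hf hN => ?_⟩
  have hK1 := hA.one_le
  have : 0 < K := hA.pos
  have hpow {i : ℕ} (hi : i ≤ j + 2 * q + 8) : K ^ i ≤ N := (pow_le_pow_right₀ hK1 hi).trans hN
  obtain ⟨W, hWΩ, k, x, hW, hcard⟩ := exists_subset_nearCollisions hA hF hcoef hdisc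
    (hpow (by omega)) rfl (hq A K N f hA.nonempty hA.hundred_le hF hf (hpow (by omega)))
  have hmem (w) (hw : w ∈ W) := mem_nearCollisions.1 (hWΩ hw)
  simp only [Finset.mem_product] at hmem
  obtain ⟨w, hw⟩ : W.Nonempty := by
    rw [Finset.nonempty_iff_ne_empty]
    rintro rfl
    simpa using hA.card_pos.trans_le hcard
  obtain ⟨h₁, h₂, -, -, -, hk⟩ := hmem w hw
  refine ⟨W.image fun w => w.1.1, Finset.image_subset_iff.2 fun w hw => (hmem w hw).1.1, x, k,
    hcard.trans ?_, ?_, ?_, ?_⟩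
  · gcongr
    omega
  · rw [← (hW w hw).1, Int.cast_sub]
    exact hF.abs_sub_le h₁.2 h₂.2
  · rw [← Int.cast_sub, (hW w hw).1, div_le_iff₀' (by positivity)] at hk
    refine hk.trans ?_
    gcongr
    omega
  · simp only [Finset.forall_mem_image]
    intro w hw
    obtain ⟨hwk, hwx, hpop⟩ := hW w hw
    have := hj A K N s w hA hF hcoef (hpow (by omega)) (hWΩ hw) hpop
    rw [hwk, hwx] at this
    exact this.mono hK1 (by omega)

end RichDirections

lemma exists_le_pow_of_isValueColoring (κ : Type*) {α β γ : ℤ} {s : ℝ} (hs0 : 0 < s) (hs1 : s < 1)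
    (hdisc : β ^ 2 - 4 * α * γ ≠ 0) :
    ∃ J : ℕ, ∀ (A : Finset ℤ) (K N : ℝ) (f : ℤ × ℤ → κ), SmallDoubling A K →
      IsFrostman A N s K → |(α : ℝ)| + |(β : ℝ)| + |(γ : ℝ)| ≤ K →
      IsValueColoring A α β γ K N f → N ≤ K ^ J := by
  obtain ⟨J, hJ⟩ := exists_isMultiplier_sub_div κ hs0 hdisc
  set g := (1 - s) / 10 with hg
  have hg0 : 0 < g := by rw [hg]; linarith
  set E := 4 * J + 4 * (J + J + 10) + 22
  refine ⟨J + ⌈E / (g * s)⌉₊, fun A K N f hA hF hcoef hf => ?_⟩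
  have hK := hA.pos
  have hN := hF.pos
  rcases le_total N (K ^ J) with hsmall | hlarge
  · exact hsmall.trans (pow_le_pow_right₀ hA.one_le (by omega))
  obtain ⟨A', hA', x, k, hcard, hkN, hNk, hmul⟩ := hJ A K N f hA hF hcoef hf hlarge
  have hdiff (a) (ha : a ∈ A') (b) (hb : b ∈ A') :
      IsMultiplier A K (J + J + 10) (((a : ℝ) - b) / k) := by
    have := (hmul a ha).sub hA (hmul b hb)
    rwa [← sub_div, sub_sub_sub_cancel_right] at this
  have hNE : N ^ (g * s) ≤ K ^ E :=
    rpow_le_of_isMultiplier_sub_div hA hF hA' hcard hs0.le hg0.le (by rw [hg]; linarith) hkN hNk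
      hdiff
  calc N = (N ^ (g * s)) ^ (g * s)⁻¹ := (Real.rpow_rpow_inv hN.le (by positivity)).symm
    _ ≤ (K ^ E) ^ (g * s)⁻¹ := by gcongr
    _ = K ^ (E / (g * s)) := by rw [← Real.rpow_natCast_mul hK.le, div_eq_mul_inv]
    _ ≤ K ^ ((J + ⌈E / (g * s)⌉₊ : ℕ) : ℝ) := by
        refine Real.rpow_le_rpow_of_exponent_le hA.one_le ((Nat.le_ceil _).trans ?_)
        exact_mod_cast Nat.le_add_left _ _
    _ = K ^ (J + ⌈E / (g * s)⌉₊) := Real.rpow_natCast _ _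

section Rescaling

variable {δ s C K M : ℝ} {A B : Finset ℝ}

lemma exists_coloring_card_le_coverNum {ι : Type*} (hδ : 0 ≤ δ) {X : Set ℝ} (hX : X.Finite)
    (I : Finset ι) (g : ι → ℝ) (hg : ∀ i ∈ I, g i ∈ X) :
    ∃ f : ι → Set ℝ, (I.image f).card ≤ coverNum δ X ∧
      ∀ i ∈ I, ∀ j ∈ I, f i = f j → |g i - g j| ≤ δ := by
  have hne : {m : ℕ | ∃ F : Finset (Set ℝ), F.card = m ∧
      (∀ U ∈ F, Metric.ediam U ≤ ENNReal.ofReal δ) ∧ X ⊆ ⋃ U ∈ F, U}.Nonempty := by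
    refine ⟨_, hX.toFinset.image fun x => {x}, rfl, ?_, fun x hx => ?_⟩
    · simp only [Finset.forall_mem_image]
      exact fun x _ => Metric.ediam_singleton.trans_le bot_le
    · exact Set.mem_biUnion (Finset.mem_image_of_mem _ (hX.mem_toFinset.2 hx)) rfl
  obtain ⟨F, hF, hdiam, hcover⟩ := Nat.sInf_mem hne
  have hmem (i) (hi : i ∈ I) : ∃ U ∈ F, g i ∈ U := by
    simpa only [Set.mem_iUnion, exists_prop] using hcover (hg i hi)
  choose! f hfF hgf using hmem
  refine ⟨f, (Finset.card_le_card (Finset.image_subset_iff.2 hfF)).trans_eq hF,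
    fun i hi j hj hij => ?_⟩
  have hdist := (Metric.edist_le_ediam_of_mem (hgf i hi) (hij ▸ hgf j hj)).trans
    (hdiam _ (hfF i hi))
  rwa [edist_dist, ENNReal.ofReal_le_ofReal_iff hδ, Real.dist_eq] at hdist

/-- A `(δ, s)`-set with constant `C`: a `δ`-separated subset of `[0, 1]` with at most `C * δ ^ (-s)`
points, a proportion at most `C * l ^ s` of which lies in any given interval of length `l ≥ δ`. -/
structure IsDeltaSet (A : Finset ℝ) (δ s C : ℝ) : Prop where
  subset_Icc : (A : Set ℝ) ⊆ Set.Icc 0 1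
  separated : ∀ x ∈ A, ∀ y ∈ A, x ≠ y → δ ≤ |x - y|
  card_le : (A.card : ℝ) ≤ C * δ ^ (-s)
  card_filter_le : ∀ x l : ℝ, δ ≤ l →
    ((A.filter fun t => t ∈ Set.Icc x (x + l)).card : ℝ) ≤ C * l ^ s * A.card

lemma IsDeltaSet.subset (hA : IsDeltaSet A δ s C) (hδ : 0 < δ) (hC : 0 ≤ C) (hM : 1 ≤ M)
    (hBA : B ⊆ A) (hAB : (A.card : ℝ) ≤ M * B.card) : IsDeltaSet B δ s (C * M) where
  subset_Icc := (Finset.coe_subset.2 hBA).trans hA.subset_Icc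
  separated x hx y hy := hA.separated x (hBA hx) y (hBA hy)
  card_le := by
    calc (B.card : ℝ) ≤ A.card := mod_cast Finset.card_le_card hBA
      _ ≤ C * δ ^ (-s) := hA.card_le
      _ ≤ C * M * δ ^ (-s) := by gcongr; exact le_mul_of_one_le_right hC hM
  card_filter_le x l hl := by
    have : 0 < l := hδ.trans_le hl
    calc ((B.filter fun t => t ∈ Set.Icc x (x + l)).card : ℝ)
        ≤ (A.filter fun t => t ∈ Set.Icc x (x + l)).card :=
          mod_cast Finset.card_le_card (Finset.filter_subset_filter _ hBA)
      _ ≤ C * l ^ s * A.card := hA.card_filter_le x l hl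
      _ ≤ C * l ^ s * (M * B.card) := by gcongr
      _ = C * M * l ^ s * B.card := by ring

/-- The set `δ⁻¹ • B`, rounded down to the integers. -/
noncomputable def discretize (δ : ℝ) (B : Finset ℝ) : Finset ℤ :=
  B.image fun x => ⌊x / δ⌋

lemma card_discretize (hδ : 0 < δ) (hsep : ∀ x ∈ B, ∀ y ∈ B, x ≠ y → δ ≤ |x - y|) :
    (discretize δ B).card = B.card := by
  refine Finset.card_image_of_injOn fun x hx y hy hxy => ?_
  by_contra hne
  have hlt := Int.abs_sub_lt_one_of_floor_eq_floor hxy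
  rw [← sub_div, abs_div, abs_of_pos hδ, div_lt_one hδ] at hlt
  exact (hsep x hx y hy hne).not_gt hlt

lemma exists_section_discretize (δ : ℝ) (B : Finset ℝ) :
    ∃ r : ℤ → ℝ, ∀ n ∈ discretize δ B, r n ∈ B ∧ ⌊r n / δ⌋ = n := by
  choose! r hr using fun n (hn : n ∈ discretize δ B) => Finset.mem_image.1 hn
  exact ⟨r, hr⟩

lemma floor_div_mem_Icc {x : ℝ} (hδ : 0 < δ) (hx : x ∈ Set.Icc 0 1) :
    (⌊x / δ⌋ : ℝ) ∈ Set.Icc 0 δ⁻¹ := by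
  obtain ⟨hx0, hx1⟩ := hx
  refine ⟨mod_cast Int.floor_nonneg.2 (by positivity), (Int.floor_le _).trans ?_⟩
  rw [div_le_iff₀ hδ, inv_mul_cancel₀ hδ.ne']
  exact hx1

lemma card_discretize_add_discretize_le (hδ : 0 < δ) (B : Finset ℝ) :
    ((discretize δ B + discretize δ B).card : ℝ) ≤
      4 * coverNum δ (Set.image2 (fun x y => x + y) (B : Set ℝ) (B : Set ℝ)) := by
  obtain ⟨r, hr⟩ := exists_section_discretize δ B
  obtain ⟨f, hf, hclose⟩ := exists_coloring_card_le_coverNum hδ.le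
    (B.finite_toSet.image2 (fun x y => x + y) B.finite_toSet) (discretize δ B ×ˢ discretize δ B)
    (fun p => r p.1 + r p.2) fun p hp => Set.mem_image2_of_mem
      (hr _ (Finset.mem_product.1 hp).1).1 (hr _ (Finset.mem_product.1 hp).2).1
  have hfiber : ∀ p ∈ discretize δ B ×ˢ discretize δ B, ∀ q ∈ discretize δ B ×ˢ discretize δ B,
      f p = f q → |((p.1 + p.2 : ℤ) : ℝ) - (q.1 + q.2 : ℤ)| ≤ 3 := by
    intro p hp q hq hpq
    have hsum := hclose p hp q hq hpq
    rw [Finset.mem_product] at hp hq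
    have hscaled : |r p.1 / δ + r p.2 / δ - (r q.1 / δ + r q.2 / δ)| ≤ 1 := by
      rw [← add_div, ← add_div, ← sub_div, abs_div, abs_of_pos hδ]
      exact div_le_one_of_le₀ hsum hδ.le
    have hp₁ := Int.floor_eq_iff.1 (hr _ hp.1).2
    have hp₂ := Int.floor_eq_iff.1 (hr _ hp.2).2
    have hq₁ := Int.floor_eq_iff.1 (hr _ hq.1).2
    have hq₂ := Int.floor_eq_iff.1 (hr _ hq.2).2
    rw [abs_le] at hscaled ⊢
    push_cast
    constructor <;> linarith
  rw [← Finset.image_add_product]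
  calc (((discretize δ B ×ˢ discretize δ B).image fun p : ℤ × ℤ => p.1 + p.2).card : ℝ)
      ≤ (3 + 1) * ((discretize δ B ×ˢ discretize δ B).image f).card :=
        card_image_le_of_abs_sub_le _ f _ (by norm_num) hfiber
    _ ≤ 4 * coverNum δ (Set.image2 (fun x y => x + y) (B : Set ℝ) (B : Set ℝ)) := by
        norm_num1
        gcongr

lemma IsDeltaSet.isFrostman_discretize (hB : IsDeltaSet B δ s C) (hδ0 : 0 < δ) (hδ1 : δ ≤ 1)
    (hs1 : s ≤ 1) (hCK : 2 * C ≤ K) (hC : 0 ≤ C) :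
    IsFrostman (discretize δ B) δ⁻¹ s K where
  one_le := (one_le_inv₀ hδ0).2 hδ1
  mem_Icc n hn := by
    obtain ⟨x, hx, rfl⟩ := Finset.mem_image.1 hn
    exact floor_div_mem_Icc hδ0 (hB.subset_Icc hx)
  card_le := by
    rw [card_discretize hδ0 hB.separated, Real.inv_rpow hδ0.le, ← Real.rpow_neg hδ0.le]
    exact hB.card_le.trans (by gcongr; linarith)
  card_le_of_abs_sub_le S hS l hl hdiam := by
    rw [card_discretize hδ0 hB.separated]
    rcases S.eq_empty_or_nonempty with rfl | hne
    · have : 0 ≤ K := by linarith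
      simp only [Finset.card_empty, Nat.cast_zero]
      positivity
    set m := S.min' hne
    set I := Set.Icc (m * δ) (m * δ + 2 * l * δ)
    have hsub : S ⊆ discretize δ (B.filter fun t => t ∈ I) := by
      intro n hn
      obtain ⟨x, hx, hxn⟩ := Finset.mem_image.1 (hS hn)
      refine Finset.mem_image.2 ⟨x, Finset.mem_filter.2 ⟨hx, ?_⟩, hxn⟩
      have hmn : (m : ℝ) ≤ n := mod_cast S.min'_le n hn
      have hnm := (abs_le.1 (hdiam n hn m (S.min'_mem hne))).2
      obtain ⟨hle, hlt⟩ := Int.floor_eq_iff.1 hxn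
      rw [Set.mem_Icc, ← add_mul, ← le_div_iff₀ hδ0, ← div_le_iff₀ hδ0]
      exact ⟨by linarith, by linarith⟩
    have htwo : (2 : ℝ) ^ s ≤ 2 := Real.rpow_le_self_of_one_le one_le_two hs1
    calc (S.card : ℝ) ≤ (B.filter fun t => t ∈ I).card :=
          mod_cast (Finset.card_le_card hsub).trans Finset.card_image_le
      _ ≤ C * (2 * l * δ) ^ s * B.card := hB.card_filter_le _ _ (by nlinarith)
      _ = 2 ^ s * C * (l / δ⁻¹) ^ s * B.card := by
          rw [div_inv_eq_mul, mul_assoc 2, Real.mul_rpow zero_le_two (by positivity)]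
          ring
      _ ≤ K * (l / δ⁻¹) ^ s * B.card := by
          gcongr
          exact (mul_le_mul_of_nonneg_right htwo hC).trans hCK

end Rescaling

section QuadraticImage

variable {α β γ : ℤ} {a₁ a₂ a₃ D δ s K N : ℝ} {B : Finset ℝ}

lemma abs_mul_sub_mul_le {u v u' v' : ℝ} (hv : v ∈ Set.Icc 0 N) (hu' : u' ∈ Set.Icc 0 N)
    (hu : |u - u'| ≤ 1) (hvv' : |v - v'| ≤ 1) : |u * v - u' * v'| ≤ 2 * N := by
  have hN : 0 ≤ N := hv.1.trans hv.2
  calc |u * v - u' * v'| = |(u - u') * v + u' * (v - v')| := by ring_nf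
    _ ≤ |u - u'| * |v| + |u'| * |v - v'| := by
        rw [← abs_mul, ← abs_mul]
        exact abs_add_le _ _
    _ ≤ 1 * N + N * 1 := by
        rw [abs_of_nonneg hv.1, abs_of_nonneg hu'.1]
        exact add_le_add (mul_le_mul hu hv.2 hv.1 zero_le_one)
          (mul_le_mul hu'.2 hvv' (abs_nonneg _) hN)
    _ = 2 * N := by ring

lemma abs_quadForm_sub_quadForm_le (α β γ : ℝ) {x y u v : ℝ} (hx : x ∈ Set.Icc 0 N)
    (hy : y ∈ Set.Icc 0 N) (hu : u ∈ Set.Icc 0 N) (hv : v ∈ Set.Icc 0 N)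
    (hxu : |x - u| ≤ 1) (hyv : |y - v| ≤ 1) :
    |quadForm α β γ x y - quadForm α β γ u v| ≤ 2 * (|α| + |β| + |γ|) * N := by
  calc |quadForm α β γ x y - quadForm α β γ u v|
      = |α * (x * x - u * u) + β * (x * y - u * v) + γ * (y * y - v * v)| := by
        unfold quadForm
        ring_nf
    _ ≤ |α| * |x * x - u * u| + |β| * |x * y - u * v| + |γ| * |y * y - v * v| := by
        simp only [← abs_mul]
        exact abs_add_three _ _ _
    _ ≤ |α| * (2 * N) + |β| * (2 * N) + |γ| * (2 * N) := by
        gcongr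
        · exact abs_mul_sub_mul_le hx hu hxu hxu
        · exact abs_mul_sub_mul_le hy hu hxu hyv
        · exact abs_mul_sub_mul_le hy hv hyv hyv
    _ = 2 * (|α| + |β| + |γ|) * N := by ring

lemma quadForm_div_div (h₁ : α = D * a₁) (h₂ : β = D * a₂) (h₃ : γ = D * a₃) (x y : ℝ) :
    quadForm α β γ (x / δ) (y / δ) = D / δ ^ 2 * quadForm a₁ a₂ a₃ x y := by
  rw [h₁, h₂, h₃]
  unfold quadForm
  ring

lemma abs_quadForm_floor_sub_le {x y : ℝ} (hδ : 0 < δ) (hx : x ∈ Set.Icc 0 1)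
    (hy : y ∈ Set.Icc 0 1) (h₁ : α = D * a₁) (h₂ : β = D * a₂) (h₃ : γ = D * a₃) :
    |quadForm α β γ ⌊x / δ⌋ ⌊y / δ⌋ - D / δ ^ 2 * quadForm a₁ a₂ a₃ x y| ≤
      2 * (|(α : ℝ)| + |(β : ℝ)| + |(γ : ℝ)|) * δ⁻¹ := by
  have hscaled {z : ℝ} (hz : z ∈ Set.Icc 0 1) : z / δ ∈ Set.Icc 0 δ⁻¹ := by
    obtain ⟨hz0, hz1⟩ := hz
    refine ⟨by positivity, ?_⟩
    rw [div_eq_mul_inv]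
    exact mul_le_of_le_one_left (by positivity) hz1
  have hround (z : ℝ) : |(⌊z⌋ : ℝ) - z| ≤ 1 := by
    rw [abs_sub_comm, Int.self_sub_floor, Int.abs_fract]
    exact (Int.fract_lt_one z).le
  rw [← quadForm_div_div h₁ h₂ h₃]
  exact abs_quadForm_sub_quadForm_le _ _ _ (floor_div_mem_Icc hδ hx) (floor_div_mem_Icc hδ hy)
    (hscaled hx) (hscaled hy) (hround _) (hround _)

lemma exists_isValueColoring_discretize (hδ : 0 < δ) (hB : (B : Set ℝ) ⊆ Set.Icc 0 1)
    (hsep : ∀ x ∈ B, ∀ y ∈ B, x ≠ y → δ ≤ |x - y|)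
    (h₁ : α = D * a₁) (h₂ : β = D * a₂) (h₃ : γ = D * a₃)
    (hK : 4 * (|(α : ℝ)| + |(β : ℝ)| + |(γ : ℝ)|) + |D| ≤ K)
    (hcover : (coverNum δ (Set.image2 (quadForm a₁ a₂ a₃) (B : Set ℝ) (B : Set ℝ)) : ℝ) ≤
      K * B.card) :
    ∃ f : ℤ × ℤ → Set ℝ, IsValueColoring (discretize δ B) α β γ K δ⁻¹ f := by
  obtain ⟨r, hr⟩ := exists_section_discretize δ B
  obtain ⟨f, hf, hclose⟩ := exists_coloring_card_le_coverNum hδ.le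
    (B.finite_toSet.image2 (quadForm a₁ a₂ a₃) B.finite_toSet) (discretize δ B ×ˢ discretize δ B)
    (fun p => quadForm a₁ a₂ a₃ (r p.1) (r p.2)) fun p hp => Set.mem_image2_of_mem
      (hr _ (Finset.mem_product.1 hp).1).1 (hr _ (Finset.mem_product.1 hp).2).1
  refine ⟨f, ?_, fun p hp q hq hpq => ?_⟩
  · rw [card_discretize hδ hsep]
    exact (Nat.cast_le.2 hf).trans hcover
  set S := |(α : ℝ)| + |(β : ℝ)| + |(γ : ℝ)|
  have hform (p : ℤ × ℤ) (hp : p ∈ discretize δ B ×ˢ discretize δ B) :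
      |quadForm α β γ p.1 p.2 - D / δ ^ 2 * quadForm a₁ a₂ a₃ (r p.1) (r p.2)| ≤
        2 * S * δ⁻¹ := by
    obtain ⟨hp₁, hp₂⟩ := Finset.mem_product.1 hp
    obtain ⟨hr₁, hfloor₁⟩ := hr _ hp₁
    obtain ⟨hr₂, hfloor₂⟩ := hr _ hp₂
    have := abs_quadForm_floor_sub_le hδ (hB hr₁) (hB hr₂) h₁ h₂ h₃
    rwa [hfloor₁, hfloor₂] at this
  have hcolor : |D / δ ^ 2 * quadForm a₁ a₂ a₃ (r p.1) (r p.2) -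
      D / δ ^ 2 * quadForm a₁ a₂ a₃ (r q.1) (r q.2)| ≤ |D| * δ⁻¹ := by
    rw [← mul_sub, abs_mul, abs_div, abs_of_pos (pow_pos hδ 2)]
    calc |D| / δ ^ 2 * |quadForm a₁ a₂ a₃ (r p.1) (r p.2) - quadForm a₁ a₂ a₃ (r q.1) (r q.2)|
        ≤ |D| / δ ^ 2 * δ := by gcongr; exact hclose p hp q hq hpq
      _ = |D| * δ⁻¹ := by field_simp
  have hscale : (4 * S + |D|) * δ⁻¹ ≤ K * δ⁻¹ := by gcongr
  have hp := abs_le.1 (hform p hp)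
  have hq := abs_le.1 (hform q hq)
  rw [abs_le] at hcolor ⊢
  constructor <;> linarith

lemma exists_inv_le_pow (hs0 : 0 < s) (hs1 : s < 1) (hdisc : β ^ 2 - 4 * α * γ ≠ 0)
    (h₁ : α = D * a₁) (h₂ : β = D * a₂) (h₃ : γ = D * a₃) :
    ∃ J : ℕ, ∀ (δ C K : ℝ) (B : Finset ℝ), 0 < δ → δ ≤ 1 → 0 ≤ C → B.Nonempty →
      IsDeltaSet B δ s C → 2 * C ≤ K →
      100 + 4 * (|(α : ℝ)| + |(β : ℝ)| + |(γ : ℝ)|) + |D| ≤ K →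
      4 * (coverNum δ (Set.image2 (fun x y => x + y) (B : Set ℝ) (B : Set ℝ)) : ℝ) ≤
        K * B.card →
      (coverNum δ (Set.image2 (quadForm a₁ a₂ a₃) (B : Set ℝ) (B : Set ℝ)) : ℝ) ≤ K * B.card →
      δ⁻¹ ≤ K ^ J := by
  obtain ⟨J, hJ⟩ := exists_le_pow_of_isValueColoring (Set ℝ) hs0 hs1 hdisc
  refine ⟨J, fun δ C K B hδ0 hδ1 hC hne hB hCK hK hadd hform => ?_⟩
  have hcoef : 0 ≤ |(α : ℝ)| + |(β : ℝ)| + |(γ : ℝ)| := by positivity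
  have hD := abs_nonneg D
  obtain ⟨f, hf⟩ := exists_isValueColoring_discretize hδ0 hB.subset_Icc hB.separated h₁ h₂ h₃
    (by linarith) hform
  refine hJ (discretize δ B) K δ⁻¹ f ⟨hne.image _, by linarith, ?_⟩
    (hB.isFrostman_discretize hδ0 hδ1 hs1.le hCK hC) (by linarith) hf
  rw [card_discretize hδ0 hB.separated]
  exact (card_discretize_add_discretize_le hδ0 B).trans hadd

lemma card_le_four_mul_coverNum_add (hδ : 0 < δ) (hB : B.Nonempty)
    (hsep : ∀ x ∈ B, ∀ y ∈ B, x ≠ y → δ ≤ |x - y|) :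
    (B.card : ℝ) ≤
      4 * coverNum δ (Set.image2 (fun x y => x + y) (B : Set ℝ) (B : Set ℝ)) := by
  refine le_trans ?_ (card_discretize_add_discretize_le hδ B)
  rw [← card_discretize hδ hsep]
  exact Nat.cast_le.2 (Finset.card_le_card_add_right (hB.image _))

lemma exists_inv_le_coverNum_add_div_card_pow (hs0 : 0 < s) (hs1 : s < 1)
    (hdisc : β ^ 2 - 4 * α * γ ≠ 0) (h₁ : α = D * a₁) (h₂ : β = D * a₂) (h₃ : γ = D * a₃) :
    ∃ (n : ℕ) (c : ℝ), n ≠ 0 ∧ 0 < c ∧ ∀ (δ C : ℝ) (B : Finset ℝ), 0 < δ → δ ≤ 1 → 1 ≤ C →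
      B.Nonempty → IsDeltaSet B δ s C →
      δ⁻¹ ≤ (c * C *
        ((coverNum δ (Set.image2 (fun x y => x + y) (B : Set ℝ) (B : Set ℝ)) +
          coverNum δ (Set.image2 (quadForm a₁ a₂ a₃) (B : Set ℝ) (B : Set ℝ))) / B.card)) ^ n := by
  obtain ⟨J, hJ⟩ := exists_inv_le_pow hs0 hs1 hdisc h₁ h₂ h₃
  set c := 100 + 4 * (|(α : ℝ)| + |(β : ℝ)| + |(γ : ℝ)|) + |D| with hc
  have hc100 : 100 ≤ c := by
    rw [hc, add_assoc]
    exact le_add_of_nonneg_right (by positivity)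
  refine ⟨J + 1, c * 4, J.succ_ne_zero, by positivity, fun δ C B hδ0 hδ1 hC hne hB => ?_⟩
  set S := (coverNum δ (Set.image2 (fun x y => x + y) (B : Set ℝ) (B : Set ℝ)) : ℝ)
  set T := (coverNum δ (Set.image2 (quadForm a₁ a₂ a₃) (B : Set ℝ) (B : Set ℝ)) : ℝ)
  have hcard : (0 : ℝ) < B.card := mod_cast hne.card_pos
  have hT : 0 ≤ T := Nat.cast_nonneg _
  have hS : (B.card : ℝ) ≤ 4 * S := card_le_four_mul_coverNum_add hδ0 hne hB.separated
  obtain ⟨t, ht⟩ : ∃ t, t = 4 * ((S + T) / B.card) := ⟨_, rfl⟩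
  have htB : t * B.card = 4 * (S + T) := by rw [ht]; field_simp
  have ht1 : 1 ≤ t := le_of_mul_le_mul_right (by linarith) hcard
  rw [show c * 4 * C * ((S + T) / B.card) = c * C * t by rw [ht]; ring]
  have hcK : c ≤ c * C * t := by
    rw [mul_assoc]
    exact le_mul_of_one_le_right (by positivity) (one_le_mul_of_one_le_of_one_le hC ht1)
  have htK : t * B.card ≤ c * C * t * B.card := by
    gcongr
    exact le_mul_of_one_le_left (by positivity) (one_le_mul_of_one_le_of_one_le (by linarith) hC)
  have hCK : 2 * C ≤ c * C * t := by
    calc 2 * C ≤ c * C := by gcongr; linarith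
      _ ≤ c * C * t := le_mul_of_one_le_right (by positivity) ht1
  have hinv := hJ δ C (c * C * t) B hδ0 hδ1 (by linarith) hne hB hCK hcK (by linarith) (by linarith)
  exact hinv.trans (pow_le_pow_right₀ (by linarith) J.le_succ)

/-- The factor `3` in `ε` pays for the gain of `δ ^ (-ε)` and for its two losses, in the
non-concentration constant and in the cardinality, when passing from `A` to `B`. -/
lemma exists_rpow_neg_mul_card_le (hs0 : 0 < s) (hs1 : s < 1) (hdisc : β ^ 2 - 4 * α * γ ≠ 0)
    (h₁ : α = D * a₁) (h₂ : β = D * a₂) (h₃ : γ = D * a₃) :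
    ∃ ε c : ℝ, 0 < ε ∧ 0 < c ∧ ∀ (δ C : ℝ) (A B : Finset ℝ), 0 < δ → δ ≤ 1 → 1 ≤ C →
      IsDeltaSet A δ s C → B ⊆ A → B.Nonempty → δ ^ ε * A.card ≤ B.card →
      δ ^ (-ε) * A.card ≤ c * C *
        (coverNum δ (Set.image2 (fun x y => x + y) (B : Set ℝ) (B : Set ℝ)) +
          coverNum δ (Set.image2 (quadForm a₁ a₂ a₃) (B : Set ℝ) (B : Set ℝ))) := by
  obtain ⟨n, c, hn, hc, hinv⟩ := exists_inv_le_coverNum_add_div_card_pow hs0 hs1 hdisc h₁ h₂ h₃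
  set ε : ℝ := 1 / (3 * n) with hε
  have hε0 : 0 < ε := by positivity
  refine ⟨ε, c, hε0, hc, fun δ C A B hδ0 hδ1 hC hA hBA hne hcard => ?_⟩
  set M := δ ^ (-ε) with hM
  have hM1 : 1 ≤ M := Real.one_le_rpow_of_pos_of_le_one_of_nonpos hδ0 hδ1 (by linarith)
  have hM0 : 0 < M := by positivity
  have hAB : (A.card : ℝ) ≤ M * B.card := by
    rwa [hM, Real.rpow_neg hδ0.le, ← div_eq_inv_mul, le_div_iff₀' (by positivity)]
  have hpow := hinv δ (C * M) B hδ0 hδ1 (one_le_mul_of_one_le_of_one_le hC hM1) hne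
    (hA.subset hδ0 (by linarith) hM1 hBA hAB)
  set S := (coverNum δ (Set.image2 (fun x y => x + y) (B : Set ℝ) (B : Set ℝ)) : ℝ)
  set T := (coverNum δ (Set.image2 (quadForm a₁ a₂ a₃) (B : Set ℝ) (B : Set ℝ)) : ℝ)
  have hMδ : (M ^ 3) ^ n = δ⁻¹ := by
    rw [← pow_mul, hM, ← Real.rpow_mul_natCast hδ0.le, ← Real.rpow_neg_one, hε]
    congr 1
    push_cast
    field_simp
  have hcube : M ^ 3 ≤ c * (C * M) * ((S + T) / B.card) :=
    le_of_pow_le_pow_left₀ hn (by positivity) (hMδ.trans_le hpow)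
  have hsq : M ^ 2 ≤ c * C * ((S + T) / B.card) := by
    refine le_of_mul_le_mul_right ?_ hM0
    linarith
  calc M * A.card ≤ M * (M * B.card) := by gcongr
    _ = M ^ 2 * B.card := by ring
    _ ≤ c * C * ((S + T) / B.card) * B.card := by gcongr
    _ = c * C * (S + T) := by
        have : (B.card : ℝ) ≠ 0 := mod_cast hne.card_pos.ne'
        field_simp

end QuadraticImage

lemma exists_int_multiple_discrim_ne_zero (a₁ a₂ a₃ : ℚ) (h : a₂ ^ 2 - 4 * a₁ * a₃ ≠ 0) :
    ∃ D α β γ : ℤ, β ^ 2 - 4 * α * γ ≠ 0 ∧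
      (α : ℝ) = D * a₁ ∧ (β : ℝ) = D * a₂ ∧ (γ : ℝ) = D * a₃ := by
  obtain ⟨⟨D, hD⟩, hint⟩ :=
    IsLocalization.exist_integer_multiples_of_finset (nonZeroDivisors ℤ) {a₁, a₂, a₃}
  have hmul (a) (ha : a ∈ ({a₁, a₂, a₃} : Finset ℚ)) : ∃ n : ℤ, (n : ℚ) = D * a := by
    obtain ⟨n, hn⟩ := hint a ha
    exact ⟨n, hn.trans (zsmul_eq_mul a D)⟩
  obtain ⟨α, hα⟩ := hmul a₁ (by simp)
  obtain ⟨β, hβ⟩ := hmul a₂ (by simp)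
  obtain ⟨γ, hγ⟩ := hmul a₃ (by simp)
  refine ⟨D, α, β, γ, fun h0 => ?_, mod_cast congrArg (Rat.cast (K := ℝ)) hα,
    mod_cast congrArg (Rat.cast (K := ℝ)) hβ, mod_cast congrArg (Rat.cast (K := ℝ)) hγ⟩
  have hdisc : ((β ^ 2 - 4 * α * γ : ℤ) : ℚ) = D ^ 2 * (a₂ ^ 2 - 4 * a₁ * a₃) := by
    push_cast
    rw [hα, hβ, hγ]
    ring
  rw [h0, Int.cast_zero, eq_comm] at hdisc
  have hD0 : (D : ℚ) ≠ 0 := mod_cast nonZeroDivisors.ne_zero hD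
  exact mul_ne_zero (pow_ne_zero 2 hD0) h hdisc

lemma IsDeltaSet.of_card_le_mul_ceil {A : Finset ℝ} {δ s C : ℝ} (hδ0 : 0 < δ) (hδ1 : δ ≤ 1)
    (hs : 0 ≤ s) (hC : 0 ≤ C) (hA : (A : Set ℝ) ⊆ Set.Icc 0 1)
    (hsep : ∀ x ∈ A, ∀ y ∈ A, x ≠ y → δ ≤ |x - y|) (hcard : (A.card : ℝ) ≤ C * ⌈δ ^ (-s)⌉₊)
    (hnc : ∀ x l : ℝ, δ ≤ l →
      ((A.filter fun t => t ∈ Set.Icc x (x + l)).card : ℝ) ≤ C * l ^ s * A.card) :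
    IsDeltaSet A δ s (2 * C) where
  subset_Icc := hA
  separated := hsep
  card_le := by
    have hone := Real.one_le_rpow_of_pos_of_le_one_of_nonpos hδ0 hδ1 (neg_nonpos.2 hs)
    calc (A.card : ℝ) ≤ C * (δ ^ (-s) + 1) :=
          hcard.trans (by gcongr; exact (Nat.ceil_lt_add_one (by positivity)).le)
      _ ≤ C * (2 * δ ^ (-s)) := by gcongr; linarith
      _ = 2 * C * δ ^ (-s) := by ring
  card_filter_le x l hl := by
    have : 0 ≤ l := hδ0.le.trans hl
    refine (hnc x l hl).trans ?_
    gcongr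
    linarith

lemma le_one_of_rpow_mul_card_le {A B : Finset ℝ} {δ ε : ℝ} (hε : 0 < ε) (hA : A.Nonempty)
    (hBA : B ⊆ A) (hcard : δ ^ ε * A.card ≤ B.card) : δ ≤ 1 := by
  refine le_of_not_gt fun hδ => ?_
  have hBA : (B.card : ℝ) ≤ A.card := mod_cast Finset.card_le_card hBA
  have hA : (0 : ℝ) < A.card := mod_cast hA.card_pos
  exact (hBA.trans_lt (lt_mul_of_one_lt_left hA (Real.one_lt_rpow hδ hε))).not_ge hcard

end DiscretizedSumProduct

open DiscretizedSumProduct in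
theorem covering_sum_product_subsets_general {s : ℝ} (hs0 : 0 < s) (hs1 : s < 1) {a₁ a₂ a₃ : ℚ}
    (hdisc : a₂ ^ 2 - 4 * a₁ * a₃ ≠ 0) :
    ∃ ε K : ℝ, 0 < ε ∧ 0 < K ∧ ∀ C : ℝ, 1 ≤ C → ∀ δ : ℝ, 0 < δ →
      ∀ A : Finset ℝ, (A : Set ℝ) ⊆ Set.Icc 0 1 → (∀ x ∈ A, ∀ y ∈ A, x ≠ y → δ ≤ |x - y|) →
      (A.card : ℝ) ≤ C * ⌈δ ^ (-s)⌉₊ →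
      (∀ x l : ℝ, δ ≤ l →
        ((A.filter fun t => t ∈ Set.Icc x (x + l)).card : ℝ) ≤ C * l ^ s * A.card) →
      ∀ B ⊆ A, δ ^ ε * A.card ≤ B.card →
      K * C⁻¹ * δ ^ (-ε) * A.card ≤
        (coverNum δ (Set.image2 (fun x y => x + y) (B : Set ℝ) (B : Set ℝ)) : ℝ) +
          coverNum δ (Set.image2 (quadForm a₁ a₂ a₃) (B : Set ℝ) (B : Set ℝ)) := by
  obtain ⟨D, α, β, γ, hdisc, h₁, h₂, h₃⟩ := exists_int_multiple_discrim_ne_zero a₁ a₂ a₃ hdisc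
  obtain ⟨ε, c, hε, hc, hmain⟩ := exists_rpow_neg_mul_card_le hs0 hs1 hdisc h₁ h₂ h₃
  refine ⟨ε, (2 * c)⁻¹, hε, by positivity, fun C hC δ hδ A hA hsep hcard hnc B hBA hB => ?_⟩
  rcases A.eq_empty_or_nonempty with rfl | hAne
  · rw [Finset.card_empty, Nat.cast_zero, mul_zero]
    positivity
  have hBne : B.Nonempty := by
    rw [← Finset.card_pos, ← Nat.cast_pos (α := ℝ)]
    exact lt_of_lt_of_le (by have := hAne.card_pos; positivity) hB
  have hδ1 := le_one_of_rpow_mul_card_le hε hAne hBA hB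
  have hset := IsDeltaSet.of_card_le_mul_ceil hδ hδ1 hs0.le (by linarith) hA hsep hcard hnc
  have hbound := hmain δ (2 * C) A B hδ hδ1 (by linarith) hset hBA hBne hB
  rw [mul_assoc, ← mul_inv, inv_mul_le_iff₀ (by positivity), mul_right_comm 2 c, mul_comm _ c]
  exact hbound

/-- Theorem: for a nondegenerate rational quadratic form `φ(x,y) = a₁x² + a₂xy + a₃y²`
(`a₂² - 4a₁a₃ ≠ 0`) and `0 < s < 1`, there are `e = e(s) > 0`, `ε = ε(φ,s) > 0` and
`K = K(φ,s) > 0` such that for all `C ≥ 1` and all `δ > 0`: if `A ⊆ [0,1]` is δ-separated of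
cardinality `⌈δ^{-s}⌉` with the non-concentration bound, then for every `B ⊆ A` with
`#B ≥ δ^ε #A` one has `E_δ(B+B) + E_δ(φ(B,B)) ≥ K C^{-e} δ^{-ε} #A`. -/
theorem covering_sum_product_subsets (s : ℝ) (hs0 : 0 < s) (hs1 : s < 1) :
    ∃ e : ℝ, 0 < e ∧
      ∀ (a₁ a₂ a₃ : ℚ), a₂ ^ 2 - 4 * a₁ * a₃ ≠ 0 →
        ∃ ε K : ℝ, 0 < ε ∧ 0 < K ∧
          ∀ C : ℝ, 1 ≤ C →
            ∀ δ : ℝ, 0 < δ →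
              ∀ A : Finset ℝ, (↑A : Set ℝ) ⊆ Set.Icc 0 1 →
                (∀ x ∈ A, ∀ y ∈ A, x ≠ y → δ ≤ |x - y|) →
                A.card = ⌈δ ^ (-s)⌉₊ →
                (∀ x l : ℝ, δ ≤ l →
                  ((A.filter (fun t => t ∈ Set.Icc x (x + l))).card : ℝ) ≤
                    C * l ^ s * (A.card : ℝ)) →
                ∀ B : Finset ℝ, B ⊆ A →
                  δ ^ ε * (A.card : ℝ) ≤ (B.card : ℝ) →
                  K * C ^ (-e) * δ ^ (-ε) * (A.card : ℝ) ≤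
                    (coverNum δ (Set.image2 (fun x y => x + y) (↑B : Set ℝ) (↑B : Set ℝ)) : ℝ) +
                      (coverNum δ (Set.image2
                        (fun x y =>
                          (a₁ : ℝ) * x ^ 2 + (a₂ : ℝ) * (x * y) + (a₃ : ℝ) * y ^ 2)
                        (↑B : Set ℝ) (↑B : Set ℝ)) : ℝ) := by
  refine ⟨1, one_pos, fun a₁ a₂ a₃ hdisc => ?_⟩
  obtain ⟨ε, K, hε, hK, hmain⟩ := covering_sum_product_subsets_general hs0 hs1 hdisc
  refine ⟨ε, K, hε, hK, fun C hC δ hδ A hA hsep hcard => ?_⟩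
  rw [Real.rpow_neg_one]
  refine hmain C hC δ hδ A hA hsep ?_
  rw [hcard]
  exact le_mul_of_one_le_left (Nat.cast_nonneg _) hC
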